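/- arXiv:2007.10475 — 12 statements merged into one kernel-verified Lean document; each statement's English description precedes it below -/
import Mathlib

section
/- (Gagliardo–Nirenberg interpolation) Let $I=(a,b)$ be a bounded interval, $1 \le q < \infty$ and $1 \le r \le \infty$. Then there exists a constant $C = C(q,r) > 0$, independent of $I$, such that for every function $u$ continuously differentiable on $[a,b]$, one has $\|u\|_{L^\infty(I)} \le C\left(1 + \frac{1}{|I|}\right) \left(\|u\|_{L^r(I)} + \|u'\|_{L^r(I)}\right)^{\delta} \|u\|_{L^q(I)}^{1-\delta}$, where $0 < \delta \le 1$ is defined by $\delta\left(\frac{1}{q} + 1 - \frac{1}{r}\right) = \frac{1}{q}$. -/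
open MeasureTheory Set
open scoped ENNReal

lemma gn_real (M W Q L k t δ : ℝ) (hM : 0 ≤ M) (hW : 0 ≤ W) (hQ : 0 ≤ Q) (hL : 0 < L)
    (hk : 0 < k) (ht : t ≤ 1) (hδ0 : 0 < δ) (hδ1 : δ ≤ 1)
    (hδ : δ * (k + 1 - t) = k)
    (H1 : ∀ l : ℝ, 0 < l → l ≤ L → M * l ^ k ≤ Q + l ^ k * l ^ (1 - t) * W)
    (H2 : M * L ^ t ≤ (1 + L) * W) :
    M ≤ 2 * (1 + 1 / L) * W ^ δ * Q ^ (1 - δ) := by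
  have hLL : 0 < 1 / L := by positivity
  have hR : 0 ≤ 2 * (1 + 1 / L) * W ^ δ * Q ^ (1 - δ) := by positivity
  rcases hW.eq_or_lt with hW0 | hW0
  · subst hW0
    have hp : 0 < L ^ t := by positivity
    have : M ≤ 0 := by
      by_contra! h
      nlinarith [mul_pos h hp]
    linarith
  rcases hQ.eq_or_lt with hQ0 | hQ0
  · subst hQ0
    rcases hδ1.eq_or_lt with h1 | h1
    · subst h1
      have : t = 1 := by linarith
      subst this
      simp only [Real.rpow_one, sub_self, Real.rpow_zero, mul_one] at *
      have : M ≤ (1 + 1 / L) * W := by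
        have : (1 + 1 / L) * W = (1 + L) * W / L := by field_simp; ring
        rw [this, le_div_iff₀ hL]; exact H2
      nlinarith [mul_pos hLL hW0]
    · have hs : 0 < 1 - t := by nlinarith
      have hle : ∀ l : ℝ, 0 < l → l ≤ L → M ≤ l ^ (1 - t) * W := by
        intro l h0 h1
        have := H1 l h0 h1
        have hp : 0 < l ^ k := by positivity
        refine le_of_mul_le_mul_right ?_ hp
        linarith
      have hc : Filter.Tendsto (fun l : ℝ => l ^ (1 - t) * W) (nhdsWithin 0 (Ioi 0))
          (nhds ((0:ℝ) ^ (1 - t) * W)) := by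
        refine Filter.Tendsto.mono_left ?_ nhdsWithin_le_nhds
        exact ((Real.continuousAt_rpow_const 0 (1 - t) (Or.inr hs.le)).mul_const W)
      have := ge_of_tendsto hc (b := M) (by
        filter_upwards [Ioc_mem_nhdsGT hL] with l hl
        exact hle l hl.1 hl.2)
      rw [Real.zero_rpow hs.ne', zero_mul] at this
      linarith
  have hs : 0 < k + 1 - t := by linarith
  rcases le_total Q (W * L ^ (k + 1 - t)) with h | h
  · set l := (Q / W) ^ (1 / (k + 1 - t)) with hl
    have hl0 : 0 < l := by positivity
    have hlp : l ^ (k + 1 - t) = Q / W := by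
      rw [hl, ← Real.rpow_mul (by positivity), one_div_mul_cancel hs.ne', Real.rpow_one]
    have hlL : l ≤ L := by
      rw [← Real.rpow_le_rpow_iff hl0.le hL.le hs, hlp, div_le_iff₀ hW0]
      linarith
    have h1 := H1 l hl0 hlL
    have hlk : l ^ k = Q ^ δ / W ^ δ := by
      rw [← Real.div_rpow hQ hW, ← hlp, ← Real.rpow_mul hl0.le, mul_comm, hδ]
    rw [← Real.rpow_add hl0, ← add_sub_assoc, hlp, div_mul_cancel₀ _ hW0.ne', hlk] at h1
    have hQd : 0 < Q ^ δ := by positivity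
    have hWd : 0 < W ^ δ := by positivity
    have h2 : M ≤ 2 * W ^ δ * Q ^ (1 - δ) := by
      rw [Real.rpow_sub hQ0, Real.rpow_one]
      rw [← mul_div_assoc, div_le_iff₀ hWd] at h1
      rw [← mul_div_assoc, le_div_iff₀ hQd]
      linarith
    have : 0 < W ^ δ * Q ^ (1 - δ) := by positivity
    nlinarith [mul_pos hLL this]
  · have h1 := H1 L hL le_rfl
    rw [← Real.rpow_add hL, ← add_sub_assoc] at h1
    have h1' : M * L ^ k ≤ 2 * Q := by linarith
    have e1 := Real.rpow_le_rpow (by positivity) h1' (sub_nonneg.2 hδ1)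
    have e2 := Real.rpow_le_rpow (by positivity) H2 hδ0.le
    have e3 := mul_le_mul e1 e2 (by positivity) (by positivity)
    rw [Real.mul_rpow hM (by positivity), Real.mul_rpow hM (by positivity),
      Real.mul_rpow (by norm_num) hQ, Real.mul_rpow (by positivity) hW,
      ← Real.rpow_mul hL.le, ← Real.rpow_mul hL.le] at e3
    have e4 : M ^ (1 - δ) * L ^ (k * (1 - δ)) * (M ^ δ * L ^ (t * δ)) = M * L ^ δ := by
      have : M ^ (1 - δ) * M ^ δ = M := by
        rw [← Real.rpow_add_of_nonneg hM (by linarith) hδ0.le]; simp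
      have h' : L ^ (k * (1 - δ)) * L ^ (t * δ) = L ^ δ := by
        rw [← Real.rpow_add hL]; congr 1; linarith
      calc _ = (M ^ (1 - δ) * M ^ δ) * (L ^ (k * (1 - δ)) * L ^ (t * δ)) := by ring
        _ = _ := by rw [this, h']
    rw [e4] at e3
    have hLd : 0 < L ^ δ := by positivity
    rw [← le_div_iff₀ hLd] at e3
    refine e3.trans ?_
    have e5 : (2:ℝ) ^ (1 - δ) * Q ^ (1 - δ) * ((1 + L) ^ δ * W ^ δ) / L ^ δ
        = (2:ℝ) ^ (1 - δ) * ((1 + 1 / L) ^ δ) * W ^ δ * Q ^ (1 - δ) := by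
      have : 1 + 1 / L = (1 + L) / L := by field_simp; ring
      rw [this, Real.div_rpow (by positivity) hL.le]; ring
    rw [e5]
    have e6 : (2:ℝ) ^ (1 - δ) ≤ 2 := by
      calc (2:ℝ) ^ (1 - δ) ≤ 2 ^ (1:ℝ) :=
            Real.rpow_le_rpow_of_exponent_le (by norm_num) (by linarith)
        _ = 2 := by simp
    have e7 : (1 + 1 / L) ^ δ ≤ 1 + 1 / L := by
      calc (1 + 1 / L) ^ δ ≤ (1 + 1 / L) ^ (1:ℝ) :=
            Real.rpow_le_rpow_of_exponent_le (by linarith) (by linarith)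
        _ = _ := by simp
    gcongr

lemma gn_cont {a b : ℝ} (h : a < b) {u : ℝ → ℝ} (hu : ContDiffOn ℝ 1 u (Icc a b)) :
    ContinuousOn (derivWithin u (Icc a b)) (Icc a b) :=
  hu.continuousOn_derivWithin (uniqueDiffOn_Icc h) le_rfl

lemma gn_memLp {a b : ℝ} {f : ℝ → ℝ} (hf : ContinuousOn f (Icc a b)) (p : ℝ≥0∞) :
    MemLp f p (volume.restrict (Ioo a b)) := by
  obtain ⟨C, hC⟩ := isCompact_Icc.exists_bound_of_continuousOn hf
  refine MemLp.of_bound ((hf.mono Ioo_subset_Icc_self).aestronglyMeasurable measurableSet_Ioo) C ?_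
  filter_upwards [ae_restrict_mem measurableSet_Ioo] with x hx
  exact hC x (Ioo_subset_Icc_self hx)

lemma gn_ftc_aux {a b c d x y : ℝ} (h : a < b) {u : ℝ → ℝ} (hu : ContDiffOn ℝ 1 u (Icc a b))
    (hac : a ≤ c) (hdb : d ≤ b) (hcx : c ≤ x) (hxy : x ≤ y) (hyd : y ≤ d) :
    |u y - u x| ≤ ∫ s in Ioo c d, |derivWithin u (Icc a b) s| := by
  have hsub : Icc x y ⊆ Icc a b := Icc_subset_Icc (hac.trans hcx) (hyd.trans hdb)
  have hcont := gn_cont h hu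
  have hint : IntervalIntegrable (derivWithin u (Icc a b)) volume x y := by
    apply ContinuousOn.intervalIntegrable
    rw [uIcc_of_le hxy]; exact hcont.mono hsub
  have e : ∫ s in x..y, derivWithin u (Icc a b) s = u y - u x := by
    apply intervalIntegral.integral_eq_sub_of_hasDerivAt_of_le hxy (hu.continuousOn.mono hsub) _ hint
    intro s hs
    have hs' : s ∈ Icc a b := hsub (Ioo_subset_Icc_self hs)
    have hd := (hu.differentiableOn one_ne_zero s hs').hasDerivWithinAt
    exact hd.hasDerivAt (Filter.mem_of_superset (Icc_mem_nhds hs.1 hs.2) hsub)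
  rw [← e]
  refine (intervalIntegral.abs_integral_le_integral_abs hxy).trans ?_
  rw [intervalIntegral.integral_of_le hxy, ← integral_Ioc_eq_integral_Ioo]
  apply setIntegral_mono_set
  · have : IntegrableOn (derivWithin u (Icc a b)) (Icc c d) volume :=
      (hcont.mono (Icc_subset_Icc hac hdb)).integrableOn_Icc
    exact (this.mono_set Ioc_subset_Icc_self).abs
  · exact Filter.Eventually.of_forall fun s => abs_nonneg _
  · exact (Ioc_subset_Ioc hcx hyd).eventuallyLE

lemma gn_key {a b : ℝ} (h : a < b) {u : ℝ → ℝ} (hu : ContDiffOn ℝ 1 u (Icc a b))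
    {p r : ℝ≥0∞} (hp : 1 ≤ p) (hr : 1 ≤ r) {x₀ : ℝ} (hx₀ : x₀ ∈ Icc a b) {l : ℝ} (hl : 0 < l)
    (hlL : l ≤ b - a) :
    |u x₀| * l ^ (1 / p.toReal) ≤ (eLpNorm u p (volume.restrict (Ioo a b))).toReal +
      l ^ (1 / p.toReal) * l ^ (1 - 1 / r.toReal) *
      (eLpNorm (derivWithin u (Icc a b)) r (volume.restrict (Ioo a b))).toReal := by
  obtain ⟨c, hac, hcb, hcx, hxc⟩ : ∃ c, a ≤ c ∧ c + l ≤ b ∧ c ≤ x₀ ∧ x₀ ≤ c + l := by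
    refine ⟨max a (x₀ - l), le_max_left _ _, ?_, ?_, ?_⟩
    · rcases max_cases a (x₀ - l) with ⟨h1, _⟩ | ⟨h1, _⟩ <;> rw [h1] <;> linarith [hx₀.1, hx₀.2]
    · exact max_le hx₀.1 (by linarith)
    · linarith [le_max_right a (x₀ - l)]
  set v := derivWithin u (Icc a b) with hv
  have hcont : ContinuousOn v (Icc a b) := gn_cont h hu
  have hsub : Ioo c (c + l) ⊆ Ioo a b := Ioo_subset_Ioo hac hcb
  have hmono : volume.restrict (Ioo c (c + l)) ≤ volume.restrict (Ioo a b) :=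
    Measure.restrict_mono_set _ hsub
  have hvol : (volume.restrict (Ioo c (c + l))) univ = ENNReal.ofReal l := by simp
  set K := ∫ s in Ioo c (c + l), |v s| with hK
  have hvr := gn_memLp hcont r
  have hKle : K ≤ l ^ (1 - 1 / r.toReal) * (eLpNorm v r (volume.restrict (Ioo a b))).toReal := by
    have hm := (gn_memLp hcont 1).mono_measure hmono
    have e1 : ENNReal.ofReal K = eLpNorm v 1 (volume.restrict (Ioo c (c + l))) := by
      rw [eLpNorm_one_eq_lintegral_enorm, hK]
      have := ofReal_integral_norm_eq_lintegral_enorm (memLp_one_iff_integrable.1 hm)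
      simpa [Real.norm_eq_abs] using this
    have e2 := eLpNorm_le_eLpNorm_mul_rpow_measure_univ hr hm.1
    rw [← e1, hvol] at e2
    have e3 := e2.trans (mul_le_mul_left (eLpNorm_mono_measure v hmono) _)
    have hfin := hvr.2.ne
    rw [ENNReal.ofReal_rpow_of_pos hl, ← ENNReal.ofReal_toReal hfin,
      ← ENNReal.ofReal_mul ENNReal.toReal_nonneg,
      ENNReal.ofReal_le_ofReal_iff (by positivity)] at e3
    simpa [mul_comm] using e3
  have hpt : ∀ x ∈ Ioo c (c + l), |u x₀| ≤ |u x| + K := by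
    intro x hx
    have h1 : |u x₀ - u x| ≤ K := by
      rcases le_total x x₀ with hh | hh
      · exact gn_ftc_aux h hu hac hcb hx.1.le hh hxc
      · rw [abs_sub_comm]; exact gn_ftc_aux h hu hac hcb hcx hh hx.2.le
    have := abs_sub_abs_le_abs_sub (u x₀) (u x)
    linarith
  have hup := gn_memLp hu.continuousOn p
  have hmain : max (|u x₀| - K) 0 * l ^ (1 / p.toReal) ≤
      (eLpNorm u p (volume.restrict (Ioo a b))).toReal := by
    have e1 : eLpNorm (fun _ : ℝ => max (|u x₀| - K) 0) p (volume.restrict (Ioo c (c + l))) ≤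
        eLpNorm u p (volume.restrict (Ioo c (c + l))) := by
      apply eLpNorm_mono_ae
      filter_upwards [ae_restrict_mem measurableSet_Ioo] with x hx
      rw [Real.norm_eq_abs, Real.norm_eq_abs, abs_of_nonneg (le_max_right _ _)]
      exact max_le (by linarith [hpt x hx]) (abs_nonneg _)
    have hne : volume.restrict (Ioo c (c + l)) ≠ 0 := by
      intro h0
      rw [h0] at hvol
      have := hvol.symm
      simp at this
      linarith
    rw [eLpNorm_const _ (by positivity) hne, hvol] at e1
    have e3 := e1.trans (eLpNorm_mono_measure u hmono)
    rw [ENNReal.ofReal_rpow_of_pos hl, ← ENNReal.ofReal_toReal hup.2.ne,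
      Real.enorm_of_nonneg (le_max_right _ _), ← ENNReal.ofReal_mul (le_max_right _ _),
      ENNReal.ofReal_le_ofReal_iff (by positivity)] at e3
    exact e3
  have hlp : 0 < l ^ (1 / p.toReal) := by positivity
  have h5 : (|u x₀| - K) * l ^ (1 / p.toReal) ≤ max (|u x₀| - K) 0 * l ^ (1 / p.toReal) := by
    gcongr; exact le_max_left _ _
  nlinarith [mul_le_mul_of_nonneg_left hKle hlp.le]

/-- **Gagliardo–Nirenberg interpolation** (Proposition 3.6): for `1 ≤ q < ∞`, `1 ≤ r ≤ ∞`
there is a constant `C = C(q, r) > 0`, independent of the interval `I = (a, b)`, such that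
for every `u` continuously differentiable on `[a, b]`,
`‖u‖_{L^∞(I)} ≤ C (1 + 1/|I|) ‖u‖_{W^{1,r}(I)}^δ ‖u‖_{L^q(I)}^{1-δ}`, where
`δ (1/q + 1 - 1/r) = 1/q` and `‖u‖_{W^{1,r}} = ‖u‖_{L^r} + ‖u'‖_{L^r}`. -/
theorem gagliardo_nirenberg (q r : ℝ≥0∞) (hq : 1 ≤ q) (hq' : q ≠ ∞) (hr : 1 ≤ r)
    (δ : ℝ) (hδ0 : 0 < δ) (hδ1 : δ ≤ 1)
    (hδ : δ * (1 / q.toReal + 1 - 1 / r.toReal) = 1 / q.toReal) :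
    ∃ C > (0:ℝ), ∀ (a b : ℝ), a < b → ∀ u : ℝ → ℝ, ContDiffOn ℝ 1 u (Icc a b) →
      eLpNorm u ∞ (volume.restrict (Ioo a b)) ≤
        ENNReal.ofReal (C * (1 + 1 / (b - a))) *
          (eLpNorm u r (volume.restrict (Ioo a b)) +
            eLpNorm (derivWithin u (Icc a b)) r (volume.restrict (Ioo a b))) ^ δ *
          (eLpNorm u q (volume.restrict (Ioo a b))) ^ (1 - δ) := by
  refine ⟨2, two_pos, ?_⟩
  intro a b hab u hu
  have hL : 0 < b - a := by linarith
  obtain ⟨x₀, hx₀, hmax⟩ := isCompact_Icc.exists_isMaxOn (nonempty_Icc.2 hab.le)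
    hu.continuousOn.abs
  have hur := gn_memLp hu.continuousOn r
  have huq := gn_memLp hu.continuousOn q
  have hvr := gn_memLp (gn_cont hab hu) r
  have h1 : eLpNorm u ∞ (volume.restrict (Ioo a b)) ≤ ENNReal.ofReal |u x₀| := by
    rw [eLpNorm_exponent_top]
    apply eLpNormEssSup_le_of_ae_bound
    filter_upwards [ae_restrict_mem measurableSet_Ioo] with x hx
    exact hmax (Ioo_subset_Icc_self hx)
  refine h1.trans ?_
  have hq1 : 1 ≤ q.toReal := by
    simpa using ENNReal.toReal_mono hq' hq
  have hr1 : 1 / r.toReal ≤ 1 := by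
    by_cases hrt : r = ∞
    · simp [hrt]
    · have : 1 ≤ r.toReal := by simpa using ENNReal.toReal_mono hrt hr
      rw [div_le_one (by linarith)]; exact this
  set A := eLpNorm u r (volume.restrict (Ioo a b)) with hA
  set B := eLpNorm (derivWithin u (Icc a b)) r (volume.restrict (Ioo a b)) with hB
  set Q := eLpNorm u q (volume.restrict (Ioo a b)) with hQ
  have hA' : A ≠ ∞ := hur.2.ne
  have hB' : B ≠ ∞ := hvr.2.ne
  have hQ' : Q ≠ ∞ := huq.2.ne
  have hreal := gn_real |u x₀| (A + B).toReal Q.toReal (b - a) (1 / q.toReal) (1 / r.toReal) δ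
    (abs_nonneg _) ENNReal.toReal_nonneg ENNReal.toReal_nonneg hL (by positivity) hr1 hδ0 hδ1 hδ
    (by
      intro l hl hlL
      have := gn_key hab hu hq hr hx₀ hl hlL
      refine this.trans ?_
      gcongr
      · exact ENNReal.add_ne_top.2 ⟨hA', hB'⟩
      · exact le_add_self)
    (by
      have := gn_key hab hu hr hr hx₀ hL le_rfl
      rw [← Real.rpow_add hL] at this
      refine this.trans ?_
      rw [ENNReal.toReal_add hA' hB']
      have e : 1 / r.toReal + (1 - 1 / r.toReal) = 1 := by ring
      rw [e, Real.rpow_one]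
      nlinarith [mul_nonneg hL.le (ENNReal.toReal_nonneg (a := A)),
        ENNReal.toReal_nonneg (a := B)])
  refine (ENNReal.ofReal_le_ofReal hreal).trans ?_
  have : 0 < 1 / (b - a) := by positivity
  rw [ENNReal.ofReal_mul (by positivity), ENNReal.ofReal_mul (by positivity),
    ← ENNReal.ofReal_rpow_of_nonneg ENNReal.toReal_nonneg hδ0.le,
    ← ENNReal.ofReal_rpow_of_nonneg ENNReal.toReal_nonneg (sub_nonneg.2 hδ1),
    ENNReal.ofReal_toReal (ENNReal.add_ne_top.2 ⟨hA', hB'⟩), ENNReal.ofReal_toReal hQ']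
end

section
/- Let $I=(a,b)$ be a bounded interval, $1 \le q < \infty$, $q \le p \le \infty$ and $1 \le r \le \infty$. Then there exists a constant $C = C(|I|,p,q,r) > 0$ such that for every function $u$ twice continuously differentiable on $[a,b]$ with $u(a)=u(b)=0$, one has $\|u'\|_{L^p(I)} \le C\, \|u''\|_{L^r(I)}^{\theta} \|u'\|_{L^q(I)}^{1-\theta}$, where $0 \le \theta \le 1$ is defined by $\theta\left(\frac{1}{q} + 1 - \frac{1}{r}\right) = \frac{1}{q} - \frac{1}{p}$. -/
open MeasureTheory Set
open scoped ENNReal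

lemma aux_hasDerivAt (k : ℝ) (hk : 0 ≤ k) (x : ℝ) :
    HasDerivAt (fun x : ℝ => x * |x| ^ k) ((k + 1) * |x| ^ k) x := by
  rcases hk.eq_or_lt with rfl | hk
  · simpa using hasDerivAt_id' x
  by_cases hx : x = 0
  · subst hx
    rw [hasDerivAt_iff_tendsto_slope]
    have h1 : Filter.Tendsto (fun y : ℝ => |y| ^ k) (nhdsWithin 0 {0}ᶜ)
        (nhds ((k + 1) * |(0:ℝ)| ^ k)) := by
      have : Continuous (fun y : ℝ => |y| ^ k) :=
        continuous_abs.rpow_const (fun _ => Or.inr hk.le)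
      have h2 := (this.tendsto 0).mono_left (nhdsWithin_le_nhds (s := {0}ᶜ))
      simpa [Real.zero_rpow hk.ne'] using h2
    refine h1.congr' ?_
    filter_upwards [self_mem_nhdsWithin] with y hy
    have hy : y ≠ 0 := hy
    simp [slope_def_field, hy]
  · have h1 := (hasDerivAt_abs hx).rpow_const (p := k) (Or.inl (abs_ne_zero.2 hx))
    have h2 := (hasDerivAt_id x).mul h1
    refine h2.congr_deriv ?_
    have h3 : |x| ^ (k - 1) = |x| ^ k / |x| := Real.rpow_sub_one (abs_ne_zero.2 hx) k
    have h4 : x * (SignType.sign x : ℝ) = |x| := self_mul_sign x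
    have h5 : |x| ≠ 0 := abs_ne_zero.2 hx
    rw [h3]
    simp only [id]
    calc 1 * |x| ^ k + x * ((SignType.sign x : ℝ) * k * (|x| ^ k / |x|))
        = |x| ^ k + (x * (SignType.sign x : ℝ)) * k * (|x| ^ k / |x|) := by ring
      _ = _ := by rw [h4]; field_simp; ring

lemma aux_ftc (a b c x : ℝ) (hc : c ∈ Ioo a b) (hx : x ∈ Ioo a b) (g g' : ℝ → ℝ)
    (hd : ∀ y ∈ Ioo a b, HasDerivAt g (g' y) y)
    (hg' : ContinuousOn g' (Icc a b)) (h0 : g c = 0) :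
    ‖g x‖ₑ ≤ ∫⁻ y in Ioo a b, ‖g' y‖ₑ := by
  have hsub : uIcc c x ⊆ Ioo a b := (ordConnected_Ioo).uIcc_subset hc hx
  have hint := intervalIntegral.integral_eq_sub_of_hasDerivAt (a := c) (b := x)
    (fun y hy => hd y (hsub hy))
    ((hg'.mono (hsub.trans Ioo_subset_Icc_self)).intervalIntegrable)
  rw [h0, sub_zero] at hint
  rw [← hint]
  have : ‖∫ y in c..x, g' y‖ₑ = ‖∫ y in uIoc c x, g' y‖ₑ := by
    rw [← ofReal_norm, ← ofReal_norm, intervalIntegral.norm_intervalIntegral_eq]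
  rw [this]
  refine (enorm_integral_le_lintegral_enorm _).trans ?_
  exact lintegral_mono_set (uIoc_subset_uIcc.trans hsub)

lemma aux_interp (v : ℝ → ℝ) (μ : Measure ℝ) (M : ℝ≥0∞) (p q : ℝ≥0∞) (hq : 1 ≤ q) (hq' : q ≠ ∞)
    (hqp : q ≤ p) (hm : AEStronglyMeasurable v μ) (hv : ∀ᵐ x ∂μ, ‖v x‖ₑ ≤ M) :
    eLpNorm v p μ ≤ M ^ (1 - q.toReal / p.toReal) * (eLpNorm v q μ) ^ (q.toReal / p.toReal) := by
  by_cases hp : p = ∞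
  · subst hp
    simpa using eLpNormEssSup_le_of_ae_enorm_bound hv
  have hq0 : q ≠ 0 := (zero_lt_one.trans_le hq).ne'
  have hp0 : p ≠ 0 := (zero_lt_one.trans_le (hq.trans hqp)).ne'
  have hqr : 0 < q.toReal := ENNReal.toReal_pos hq0 hq'
  have hpr : 0 < p.toReal := ENNReal.toReal_pos hp0 hp
  have hqpr : q.toReal ≤ p.toReal := ENNReal.toReal_mono hp hqp
  rw [eLpNorm_eq_lintegral_rpow_enorm_toReal hp0 hp,
    eLpNorm_eq_lintegral_rpow_enorm_toReal hq0 hq', ← ENNReal.rpow_mul]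
  have h1 : ∫⁻ x, ‖v x‖ₑ ^ p.toReal ∂μ ≤
      M ^ (p.toReal - q.toReal) * ∫⁻ x, ‖v x‖ₑ ^ q.toReal ∂μ := by
    rw [← lintegral_const_mul'' _ (hm.enorm.pow_const _)]
    refine lintegral_mono_ae ?_
    filter_upwards [hv] with x hx
    calc ‖v x‖ₑ ^ p.toReal = ‖v x‖ₑ ^ (p.toReal - q.toReal) * ‖v x‖ₑ ^ q.toReal := by
          rw [← ENNReal.rpow_add_of_nonneg _ _ (by linarith) hqr.le]; congr 1; ring
      _ ≤ _ := by gcongr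
  calc _ ≤ (M ^ (p.toReal - q.toReal) * ∫⁻ x, ‖v x‖ₑ ^ q.toReal ∂μ) ^ (1 / p.toReal) := by
        gcongr
    _ = _ := by
        rw [ENNReal.mul_rpow_of_nonneg _ _ (by positivity), ← ENNReal.rpow_mul]
        congr 2 <;> field_simp

/-- **Proposition 3.8**: for a bounded interval `I = (a, b)`, `1 ≤ q < ∞`, `q ≤ p ≤ ∞`,
`1 ≤ r ≤ ∞`, there is a constant `C = C(|I|, p, q, r) > 0` such that for every `u` twice
continuously differentiable on `[a, b]` with `u a = u b = 0`,
`‖u'‖_{L^p(I)} ≤ C ‖u''‖_{L^r(I)}^θ ‖u'‖_{L^q(I)}^{1-θ}`, where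
`θ (1/q + 1 - 1/r) = 1/q - 1/p`. -/
theorem interpolation_deriv (p q r : ℝ≥0∞) (hq : 1 ≤ q) (hq' : q ≠ ∞) (hqp : q ≤ p)
    (hr : 1 ≤ r) (θ : ℝ) (hθ0 : 0 ≤ θ) (hθ1 : θ ≤ 1)
    (hθ : θ * (1 / q.toReal + 1 - 1 / r.toReal) = 1 / q.toReal - 1 / p.toReal)
    (a b : ℝ) (hab : a < b) :
    ∃ C > (0:ℝ), ∀ u : ℝ → ℝ, ContDiffOn ℝ 2 u (Icc a b) → u a = 0 → u b = 0 →
      eLpNorm (derivWithin u (Icc a b)) p (volume.restrict (Ioo a b)) ≤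
        ENNReal.ofReal C *
          (eLpNorm (derivWithin (derivWithin u (Icc a b)) (Icc a b)) r
            (volume.restrict (Ioo a b))) ^ θ *
          (eLpNorm (derivWithin u (Icc a b)) q (volume.restrict (Ioo a b))) ^ (1 - θ) := by
  have hq0 : q ≠ 0 := (zero_lt_one.trans_le hq).ne'
  have hqr : 0 < q.toReal := ENNReal.toReal_pos hq0 hq'
  have hrinv : r⁻¹ ≤ 1 := ENNReal.inv_le_one.2 hr
  have hβ : (1 - r⁻¹).toReal = 1 - 1 / r.toReal := by
    rw [ENNReal.toReal_sub_of_le hrinv ENNReal.one_ne_top]; simp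
  have hβ0 : 0 ≤ 1 - 1 / r.toReal := hβ ▸ ENNReal.toReal_nonneg
  obtain ⟨k, hk⟩ : ∃ k, k = q.toReal * (1 - 1 / r.toReal) := ⟨_, rfl⟩
  have hk0 : 0 ≤ k := by rw [hk]; positivity
  have hθk : θ * (k + 1) = 1 - q.toReal / p.toReal := by
    have h1 : q.toReal * (θ * (1 / q.toReal + 1 - 1 / r.toReal))
        = q.toReal * (1 / q.toReal - 1 / p.toReal) := by rw [hθ]
    have h2 : q.toReal * (1 / q.toReal) = 1 := by field_simp
    rw [hk]
    linear_combination h1 + (1 - θ) * h2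
  have ht0 : 0 ≤ q.toReal / p.toReal := by positivity
  refine ⟨(k + 1) ^ θ, by positivity, fun u hu hua hub => ?_⟩
  have hud : UniqueDiffOn ℝ (Icc a b) := uniqueDiffOn_Icc hab
  have hv1 : ContDiffOn ℝ 1 (derivWithin u (Icc a b)) (Icc a b) :=
    hu.derivWithin hud (by norm_num)
  obtain ⟨c, hc, hc0⟩ := exists_deriv_eq_zero hab hu.continuousOn (hua.trans hub.symm)
  rw [← derivWithin_of_mem_nhds (Icc_mem_nhds hc.1 hc.2)] at hc0
  generalize derivWithin u (Icc a b) = v at *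
  have hwc : ContinuousOn (derivWithin v (Icc a b)) (Icc a b) :=
    hv1.continuousOn_derivWithin hud le_rfl
  have hvd : ∀ y ∈ Ioo a b, HasDerivAt v (derivWithin v (Icc a b) y) y := fun y hy =>
    ((hv1.differentiableOn one_ne_zero y (Ioo_subset_Icc_self hy)).hasDerivWithinAt).hasDerivAt
      (Icc_mem_nhds hy.1 hy.2)
  generalize derivWithin v (Icc a b) = w at *
  have hvc : ContinuousOn v (Icc a b) := hv1.continuousOn
  have hpc : ContinuousOn (fun y => |v y| ^ k) (Icc a b) :=
    hvc.abs.rpow_const (fun _ _ => Or.inr hk0)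
  have hvm : AEStronglyMeasurable v (volume.restrict (Ioo a b)) :=
    (hvc.mono Ioo_subset_Icc_self).aestronglyMeasurable measurableSet_Ioo
  have hwm : AEStronglyMeasurable w (volume.restrict (Ioo a b)) :=
    (hwc.mono Ioo_subset_Icc_self).aestronglyMeasurable measurableSet_Ioo
  have hpm : AEStronglyMeasurable (fun y => |v y| ^ k) (volume.restrict (Ioo a b)) :=
    (hpc.mono Ioo_subset_Icc_self).aestronglyMeasurable measurableSet_Ioo
  have hA : eLpNorm (fun y => |v y| ^ k) (1 - r⁻¹)⁻¹ (volume.restrict (Ioo a b)) ≤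
      eLpNorm v q (volume.restrict (Ioo a b)) ^ k := by
    rcases hk0.eq_or_lt with h | h
    · have h1 : 1 - 1 / r.toReal = 0 := by
        rw [← h] at hk
        rcases mul_eq_zero.1 hk.symm with h | h
        · exact absurd h hqr.ne'
        · exact h
      have h2 : 1 - r⁻¹ = 0 := by
        rw [h1, ENNReal.toReal_eq_zero_iff] at hβ
        rcases hβ with h | h
        · exact h
        · exact absurd h (by simp)
      rw [h2, ← h]
      simp only [ENNReal.inv_zero, Real.rpow_zero, ENNReal.rpow_zero, eLpNorm_exponent_top]
      exact eLpNormEssSup_le_of_ae_enorm_bound (by simp)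
    · have h1 := eLpNorm_norm_rpow (p := (1 - r⁻¹)⁻¹) (μ := volume.restrict (Ioo a b)) v h
      simp only [Real.norm_eq_abs] at h1
      rw [h1]
      have h2 : 1 - r⁻¹ ≠ 0 := by
        intro h2
        rw [h2] at hβ
        rw [← hβ] at hk
        simp at hk
        exact h.ne' hk
      have h3 : 1 - r⁻¹ ≠ ∞ := by simp
      have h4 : (1 - r⁻¹)⁻¹ * ENNReal.ofReal k = q := by
        rw [hk, ENNReal.ofReal_mul hqr.le, ENNReal.ofReal_toReal hq', ← hβ,
          ENNReal.ofReal_toReal h3, mul_comm, mul_assoc, ENNReal.mul_inv_cancel h2 h3, mul_one]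
      rw [h4]
  have hM : ∀ x ∈ Ioo a b, ‖v x‖ₑ ≤ (ENNReal.ofReal (k + 1) *
      (eLpNorm w r (volume.restrict (Ioo a b)) *
        eLpNorm v q (volume.restrict (Ioo a b)) ^ k)) ^ (1 / (k + 1)) := by
    intro x hx
    rw [one_div, ENNReal.le_rpow_inv_iff (by positivity)]
    have h1 := aux_ftc a b c x hc hx (fun y => v y * |v y| ^ k)
      (fun y => (k + 1) * |v y| ^ k * w y)
      (fun y hy => (aux_hasDerivAt k hk0 (v y)).comp y (hvd y hy))
      ((continuousOn_const.mul hpc).mul hwc) (by simp [hc0])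
    have h2 : ‖v x * |v x| ^ k‖ₑ = ‖v x‖ₑ ^ (k + 1) := by
      rw [enorm_mul, Real.enorm_rpow_of_nonneg (abs_nonneg _) hk0,
        ENNReal.rpow_add_of_nonneg _ _ hk0 zero_le_one, ENNReal.rpow_one, mul_comm, Real.enorm_abs]
    rw [← h2]
    refine h1.trans ?_
    have h3 : ∀ y, ‖(k + 1) * |v y| ^ k * w y‖ₑ =
        ENNReal.ofReal (k + 1) * ‖((fun y => |v y| ^ k) • w) y‖ₑ := by
      intro y
      rw [mul_assoc, enorm_mul, Real.enorm_of_nonneg (by positivity)]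
      rfl
    simp_rw [h3]
    rw [lintegral_const_mul' _ _ ENNReal.ofReal_ne_top]
    gcongr
    rw [← eLpNorm_one_eq_lintegral_enorm]
    haveI : ENNReal.HolderTriple (1 - r⁻¹)⁻¹ r 1 :=
      (ENNReal.HolderConjugate.inv_one_sub_inv' hr).symm
    refine (eLpNorm_smul_le_mul_eLpNorm hwm hpm (p := (1 - r⁻¹)⁻¹) (q := r)).trans ?_
    rw [mul_comm]
    gcongr
  have hI := aux_interp v (volume.restrict (Ioo a b)) _ p q hq hq' hqp hvm
    ((ae_restrict_iff' measurableSet_Ioo).2 (Filter.Eventually.of_forall hM))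
  refine hI.trans (le_of_eq ?_)
  have h1 : 1 / (k + 1) * (1 - q.toReal / p.toReal) = θ := by
    rw [← hθk]; field_simp
  have h2 : 1 - θ = k * θ + q.toReal / p.toReal := by linear_combination -hθk
  rw [← ENNReal.rpow_mul, h1, ENNReal.mul_rpow_of_nonneg _ _ hθ0,
    ENNReal.mul_rpow_of_nonneg _ _ hθ0, ENNReal.ofReal_rpow_of_pos (by positivity), h2,
    ENNReal.rpow_add_of_nonneg _ _ (by positivity) ht0, ENNReal.rpow_mul]
  ring
end

section
/- Let $I=(a,b)$ be a bounded interval and $2 \le p \le \infty$. Then there exists a constant $C = C(|I|,p) > 0$ such that for every function $u$ twice continuously differentiable on $[a,b]$ with $u(a)=u(b)=0$, one has $\|u'\|_{L^p(I)} \le C\, \|u''\|_{L^2(I)}^{\frac{1}{2}-\frac{1}{p}} \|u'\|_{L^2(I)}^{\frac{1}{2}+\frac{1}{p}}$. -/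
open MeasureTheory Set
open scoped ENNReal

lemma interp_aux_sup (a b : ℝ) (hab : a < b) (u : ℝ → ℝ) (hu : ContDiffOn ℝ 2 u (Icc a b))
    (ha : u a = 0) (hb : u b = 0) (x : ℝ) (hx : x ∈ Icc a b) :
    ‖derivWithin u (Icc a b) x‖ₑ ^ (2:ℝ) ≤ 2 *
      (eLpNorm (derivWithin (derivWithin u (Icc a b)) (Icc a b)) 2 (volume.restrict (Ioo a b)) *
       eLpNorm (derivWithin u (Icc a b)) 2 (volume.restrict (Ioo a b))) := by
  have hU : UniqueDiffOn ℝ (Icc a b) := uniqueDiffOn_Icc hab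
  have hv1 : ContDiffOn ℝ 1 (derivWithin u (Icc a b)) (Icc a b) :=
    hu.derivWithin hU (by norm_num)
  have hrolle : ∃ c ∈ Ioo a b, derivWithin u (Icc a b) c = 0 := by
    obtain ⟨c, hc, h⟩ := exists_deriv_eq_zero hab hu.continuousOn (ha.trans hb.symm)
    exact ⟨c, hc, by rw [derivWithin_of_mem_nhds (Icc_mem_nhds hc.1 hc.2), h]⟩
  obtain ⟨c, hc, hvc⟩ := hrolle
  generalize derivWithin u (Icc a b) = v at *
  have hw : ContinuousOn (derivWithin v (Icc a b)) (Icc a b) :=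
    hv1.continuousOn_derivWithin hU (by norm_num)
  have hv := hv1.continuousOn
  have hd : ∀ y ∈ Ioo a b, HasDerivAt v (derivWithin v (Icc a b) y) y := fun y hy =>
    ((hv1.differentiableOn (by norm_num)) y (Ioo_subset_Icc_self hy)).hasDerivWithinAt.hasDerivAt
      (Icc_mem_nhds hy.1 hy.2)
  generalize derivWithin v (Icc a b) = w at *
  have hsub : uIcc c x ⊆ Icc a b := by
    rw [← uIcc_of_le hab.le]
    apply uIcc_subset_uIcc <;> rw [uIcc_of_le hab.le]
    exacts [Ioo_subset_Icc_self hc, hx]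
  have hftc : ∫ y in c..x, 2 * (w y * v y) = v x ^ 2 - v c ^ 2 := by
    apply intervalIntegral.integral_eq_sub_of_hasDeriv_right (f := fun y => v y ^ 2)
    · exact (hv.mono hsub).pow 2
    · intro y hy
      have : y ∈ Ioo a b := by
        refine ⟨lt_of_le_of_lt ?_ hy.1, lt_of_lt_of_le hy.2 ?_⟩
        · exact le_min hc.1.le hx.1
        · exact max_le hc.2.le hx.2
      have h := ((hd y this).pow 2).hasDerivWithinAt (s := Ioi y)
      exact h.congr_deriv (by push_cast; ring)
    · apply ContinuousOn.intervalIntegrable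
      exact continuousOn_const.mul ((hw.mul hv).mono hsub)
  have hae : (volume.restrict (Ioo a b)) = volume.restrict (Icc a b) :=
    Measure.restrict_congr_set Ioo_ae_eq_Icc
  have hvm : AEMeasurable v (volume.restrict (Ioo a b)) := hae ▸ hv.aemeasurable measurableSet_Icc
  have hwm : AEMeasurable w (volume.restrict (Ioo a b)) := hae ▸ hw.aemeasurable measurableSet_Icc
  have e2 : ∀ f : ℝ → ℝ, eLpNorm f 2 (volume.restrict (Ioo a b)) =
      (∫⁻ y in Ioo a b, ‖f y‖ₑ ^ (2:ℝ)) ^ (1 / (2:ℝ)) := fun f => by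
    rw [eLpNorm_eq_lintegral_rpow_enorm_toReal (by norm_num) (by norm_num)]; simp
  rw [e2, e2]
  have hsq : ‖v x‖ₑ ^ (2:ℝ) = ‖∫ y in c..x, 2 * (w y * v y)‖ₑ := by
    rw [hftc, hvc]; simp [enorm_pow]
  rw [hsq, ← ofReal_norm, intervalIntegral.norm_integral_eq_norm_integral_uIoc,
    ofReal_norm]
  calc ‖∫ y in uIoc c x, 2 * (w y * v y)‖ₑ
      ≤ ∫⁻ y in uIoc c x, ‖2 * (w y * v y)‖ₑ := enorm_integral_le_lintegral_enorm _
    _ ≤ ∫⁻ y in Ioo a b, ‖2 * (w y * v y)‖ₑ := by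
        rw [hae]; exact lintegral_mono_set (uIoc_subset_uIcc.trans hsub)
    _ = 2 * ∫⁻ y in Ioo a b, ((fun y => ‖w y‖ₑ) * (fun y => ‖v y‖ₑ)) y := by
        rw [← lintegral_const_mul' _ _ (by norm_num)]
        congr 1; ext y; simp [enorm_mul, ← ofReal_norm (2:ℝ)]
    _ ≤ _ := by
        gcongr
        exact ENNReal.lintegral_mul_le_Lp_mul_Lq _ Real.HolderConjugate.two_two
          hwm.enorm hvm.enorm

lemma interp_aux_p (p : ℝ≥0∞) (hp : 2 ≤ p) (μ : Measure ℝ) (v : ℝ → ℝ) (M : ℝ≥0∞)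
    (hv : AEMeasurable v μ) (hM : ∀ᵐ x ∂μ, ‖v x‖ₑ ≤ M) :
    eLpNorm v p μ ≤ M ^ (1 - 2 / p.toReal) * eLpNorm v 2 μ ^ (2 / p.toReal) := by
  by_cases hpt : p = ∞
  · subst hpt
    simpa using eLpNormEssSup_le_of_ae_enorm_bound hM
  have hq : 2 ≤ p.toReal := by
    simpa using ENNReal.toReal_mono hpt hp
  have hp0 : p ≠ 0 := by rintro rfl; simp at hp
  rw [eLpNorm_eq_lintegral_rpow_enorm_toReal hp0 hpt,
    eLpNorm_eq_lintegral_rpow_enorm_toReal (by norm_num) (by norm_num)]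
  generalize p.toReal = q at *
  have hq0 : 0 < q := by linarith
  have h1 : ∫⁻ x, ‖v x‖ₑ ^ q ∂μ ≤ ∫⁻ x, M ^ (q - 2) * ‖v x‖ₑ ^ (2:ℝ) ∂μ := by
    apply lintegral_mono_ae
    filter_upwards [hM] with x hx
    calc ‖v x‖ₑ ^ q = ‖v x‖ₑ ^ (q - 2) * ‖v x‖ₑ ^ (2:ℝ) := by
          rw [← ENNReal.rpow_add_of_nonneg _ _ (by linarith) (by norm_num)]; simp
      _ ≤ _ := by gcongr
  have h2 : ∫⁻ x, M ^ (q - 2) * ‖v x‖ₑ ^ (2:ℝ) ∂μ ≤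
      M ^ (q - 2) * ∫⁻ x, ‖v x‖ₑ ^ (2:ℝ) ∂μ := by
    exact (lintegral_const_mul'' _ (hv.enorm.pow_const _)).le
  refine (ENNReal.rpow_le_rpow (h1.trans h2) (by positivity)).trans (le_of_eq ?_)
  rw [ENNReal.mul_rpow_of_nonneg _ _ (by positivity), ← ENNReal.rpow_mul, ← ENNReal.rpow_mul]
  congr 2
  · field_simp
  · simp; ring

theorem interpolation_deriv_two (p : ℝ≥0∞) (hp : 2 ≤ p) (a b : ℝ) (hab : a < b) :
    ∃ C > (0:ℝ), ∀ u : ℝ → ℝ, ContDiffOn ℝ 2 u (Icc a b) → u a = 0 → u b = 0 →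
      eLpNorm (derivWithin u (Icc a b)) p (volume.restrict (Ioo a b)) ≤
        ENNReal.ofReal C *
          (eLpNorm (derivWithin (derivWithin u (Icc a b)) (Icc a b)) 2
            (volume.restrict (Ioo a b))) ^ (1 / 2 - 1 / p.toReal) *
          (eLpNorm (derivWithin u (Icc a b)) 2
            (volume.restrict (Ioo a b))) ^ (1 / 2 + 1 / p.toReal) := by
  have hr : 0 ≤ 1 / 2 - 1 / p.toReal := by
    by_cases hpt : p = ∞
    · simp [hpt]
    have hq : 2 ≤ p.toReal := by
      simpa using ENNReal.toReal_mono hpt hp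
    have := one_div_le_one_div_of_le (by norm_num) hq
    linarith
  have hr' : 0 ≤ 1 / p.toReal := by positivity
  refine ⟨2 ^ (1 / 2 - 1 / p.toReal), by positivity, fun u hu ha hb => ?_⟩
  have hs := interp_aux_sup a b hab u hu ha hb
  set A := eLpNorm (derivWithin (derivWithin u (Icc a b)) (Icc a b)) 2 (volume.restrict (Ioo a b))
  set B := eLpNorm (derivWithin u (Icc a b)) 2 (volume.restrict (Ioo a b)) with hB
  have hM : ∀ᵐ x ∂(volume.restrict (Ioo a b)), ‖derivWithin u (Icc a b) x‖ₑ ≤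
      (2 * (A * B)) ^ (1 / 2 : ℝ) := by
    filter_upwards [ae_restrict_mem measurableSet_Ioo] with x hx
    have := ENNReal.rpow_le_rpow (hs x (Ioo_subset_Icc_self hx)) (z := 1/2) (by norm_num)
    rwa [← ENNReal.rpow_mul, mul_one_div_cancel (by norm_num), ENNReal.rpow_one] at this
  have hvm : AEMeasurable (derivWithin u (Icc a b)) (volume.restrict (Ioo a b)) :=
    ((hu.continuousOn_derivWithin (uniqueDiffOn_Icc hab) (by norm_num)).mono
      Ioo_subset_Icc_self).aemeasurable measurableSet_Ioo
  refine (interp_aux_p p hp _ _ _ hvm hM).trans (le_of_eq ?_)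
  rw [← hB, ← ENNReal.rpow_mul,
    show 1 / 2 * (1 - 2 / p.toReal) = 1 / 2 - 1 / p.toReal by ring,
    ENNReal.mul_rpow_of_nonneg _ _ hr, ENNReal.mul_rpow_of_nonneg _ _ hr,
    ← ENNReal.ofReal_rpow_of_pos (by norm_num),
    show 1 / 2 + 1 / p.toReal = (1 / 2 - 1 / p.toReal) + 2 / p.toReal by ring,
    ENNReal.rpow_add_of_nonneg _ _ hr (by positivity)]
  simp [mul_assoc]
end

section
/- For every $2 \le p \le \infty$ there exists a constant $C = C(p) > 0$ such that for every function $g$ three times continuously differentiable on $[-1,1]$ with $g(-1)=g(1)=0$, one has $\|g'\|_{L^p(-1,1)} \le C\, E(g)^{\frac{1}{4}+\frac{1}{2p}}\, D(g)^{\frac{1}{4}-\frac{1}{2p}}$. -/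
open MeasureTheory Set
open scoped ENNReal

/-- Derivative on the interval `[-1, 1]`. -/
noncomputable def dI (f : ℝ → ℝ) : ℝ → ℝ := derivWithin f (Icc (-1) 1)

/-- The energy `E(g) = (1/2) ∫_{-1}^{1} g'(y)^2 dy`. -/
noncomputable def energy (g : ℝ → ℝ) : ℝ :=
  (1/2) * ∫ y in Ioo (-1:ℝ) 1, (dI g y) ^ 2

/-- The dissipation `D(g) = 8 ∫_{-1}^{1} g''(y)^2 dy + (1/2) ∫_{-1}^{1} (1-y^2) g'''(y)^2 dy`. -/
noncomputable def dissipation (g : ℝ → ℝ) : ℝ :=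
  8 * (∫ y in Ioo (-1:ℝ) 1, (dI (dI g) y) ^ 2)
    + (1/2) * ∫ y in Ioo (-1:ℝ) 1, (1 - y ^ 2) * (dI (dI (dI g)) y) ^ 2


lemma aux_sup (g : ℝ → ℝ) (hg : ContDiffOn ℝ 3 g (Icc (-1) 1)) (h0 : g (-1) = 0) (h1 : g 1 = 0) :
    ContinuousOn (dI g) (Icc (-1) 1) ∧ 0 ≤ energy g ∧ 0 ≤ dissipation g ∧
    ∀ x ∈ Icc (-1:ℝ) 1, |dI g x| ≤ energy g ^ ((1:ℝ)/4) * dissipation g ^ ((1:ℝ)/4) := by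
  have hU : UniqueDiffOn ℝ (Icc (-1:ℝ) 1) := uniqueDiffOn_Icc (by norm_num)
  have hu : ContDiffOn ℝ 2 (dI g) (Icc (-1) 1) := hg.derivWithin hU (by norm_num)
  have hv : ContDiffOn ℝ 1 (dI (dI g)) (Icc (-1) 1) := hu.derivWithin hU (by norm_num)
  have hD : 8 * (∫ y in Ioo (-1:ℝ) 1, (dI (dI g) y) ^ 2) ≤ dissipation g := by
    unfold dissipation
    have : 0 ≤ ∫ y in Ioo (-1:ℝ) 1, (1 - y ^ 2) * (dI (dI (dI g)) y) ^ 2 := by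
      apply setIntegral_nonneg measurableSet_Ioo
      intro y hy
      have : 0 ≤ 1 - y ^ 2 := by nlinarith [hy.1, hy.2]
      positivity
    linarith
  obtain ⟨c, hc, hc0⟩ : ∃ c ∈ Ioo (-1:ℝ) 1, deriv g c = 0 :=
    exists_deriv_eq_zero (by norm_num) hg.continuousOn (by rw [h0, h1])
  have hc0' : dI g c = 0 := by
    unfold dI
    rw [derivWithin_of_mem_nhds (Icc_mem_nhds hc.1 hc.2), hc0]
  have hder : ∀ x ∈ Ioo (-1:ℝ) 1, HasDerivAt (dI g) (dI (dI g) x) x := by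
    intro x hx
    exact ((hu.differentiableOn (by norm_num)) x (Ioo_subset_Icc_self hx)).hasDerivWithinAt.hasDerivAt
      (Icc_mem_nhds hx.1 hx.2)
  have cu := hu.continuousOn
  have cv := hv.continuousOn
  generalize hug : dI g = u at *
  generalize hvg : dI u = v at *
  have hE : energy g = (1/2) * ∫ y in Ioo (-1:ℝ) 1, (u y) ^ 2 := by
    unfold energy; rw [hug]
  have hA0 : 0 ≤ ∫ y in Ioo (-1:ℝ) 1, (u y) ^ 2 := integral_nonneg fun y => sq_nonneg _
  have hB0 : 0 ≤ ∫ y in Ioo (-1:ℝ) 1, (v y) ^ 2 := integral_nonneg fun y => sq_nonneg _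
  have hE0 : 0 ≤ energy g := by rw [hE]; positivity
  have hD0 : 0 ≤ dissipation g := by linarith
  refine ⟨cu, hE0, hD0, ?_⟩
  have hmem : ∀ w : ℝ → ℝ, ContinuousOn w (Icc (-1) 1) →
      MemLp (fun y => |w y|) (ENNReal.ofReal 2) (volume.restrict (Ioo (-1:ℝ) 1)) := by
    intro w hw
    have h : MemLp w (ENNReal.ofReal 2) (volume.restrict (Icc (-1:ℝ) 1)) :=
      by
        obtain ⟨K, hK⟩ := isCompact_Icc.exists_bound_of_continuousOn hw
        refine MemLp.of_bound (hw.aestronglyMeasurable measurableSet_Icc) K ?_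
        exact (ae_restrict_iff' measurableSet_Icc).2 (Filter.Eventually.of_forall hK)
    exact (h.mono_measure (Measure.restrict_mono Ioo_subset_Icc_self le_rfl)).norm
  have hCS : ∫ y in Ioo (-1:ℝ) 1, |u y| * |v y| ≤
      (∫ y in Ioo (-1:ℝ) 1, (u y) ^ 2) ^ ((1:ℝ)/2) * (∫ y in Ioo (-1:ℝ) 1, (v y) ^ 2) ^ ((1:ℝ)/2) := by
    have := integral_mul_le_Lp_mul_Lq_of_nonneg (μ := volume.restrict (Ioo (-1:ℝ) 1))
      (p := 2) (q := 2) (f := fun y => |u y|) (g := fun y => |v y|)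
      (by constructor <;> norm_num)
      (Filter.Eventually.of_forall fun y => abs_nonneg _)
      (Filter.Eventually.of_forall fun y => abs_nonneg _) (hmem u cu) (hmem v cv)
    simpa using this
  intro x hx
  have hsub : uIcc c x ⊆ Icc (-1:ℝ) 1 := by
    rw [← uIcc_of_le (by norm_num : (-1:ℝ) ≤ 1)]
    apply uIcc_subset_uIcc <;> rw [uIcc_of_le (by norm_num : (-1:ℝ) ≤ 1)]
    · exact Ioo_subset_Icc_self hc
    · exact hx
  have hlt1 : -1 ≤ min c x := le_min hc.1.le hx.1
  have hlt2 : max c x ≤ 1 := max_le hc.2.le hx.2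
  have hftc : ∫ y in c..x, 2 * u y * v y = u x ^ 2 - u c ^ 2 := by
    apply intervalIntegral.integral_eq_sub_of_hasDeriv_right ((cu.mono hsub).pow 2)
    · intro y hy
      have := (hder y ⟨hlt1.trans_lt hy.1, hy.2.trans_le hlt2⟩).pow 2
      simpa using this.hasDerivWithinAt
    · exact (((continuousOn_const.mul cu).mul cv).mono hsub).intervalIntegrable
  have hb : |∫ y in c..x, 2 * u y * v y| ≤ 2 * ∫ y in Ioo (-1:ℝ) 1, |u y| * |v y| := by
    have h1 := intervalIntegral.norm_integral_le_integral_norm_uIoc (f := fun y => 2 * u y * v y)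
      (a := c) (b := x) (μ := volume)
    rw [Real.norm_eq_abs] at h1
    refine h1.trans ?_
    rw [← integral_const_mul, ← integral_Ioc_eq_integral_Ioo]
    have he : ∀ y, ‖2 * u y * v y‖ = 2 * (|u y| * |v y|) := by
      intro y; rw [Real.norm_eq_abs, abs_mul, abs_mul]; norm_num; ring
    simp only [he]
    apply setIntegral_mono_set
    · exact ((continuousOn_const.mul (cu.abs.mul cv.abs)).integrableOn_Icc).mono_set Ioc_subset_Icc_self
    · exact Filter.Eventually.of_forall fun y => by positivity
    · exact (Ioc_subset_Ioc hlt1 hlt2).eventuallyLE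
  rw [hftc, hc0'] at hb
  have hx2 : u x ^ 2 ≤ energy g ^ ((1:ℝ)/2) * dissipation g ^ ((1:ℝ)/2) := by
    have e1 : u x ^ 2 ≤ 2 * ∫ y in Ioo (-1:ℝ) 1, |u y| * |v y| := by
      refine le_trans ?_ hb
      refine le_trans ?_ (le_abs_self _)
      simp
    refine (e1.trans (mul_le_mul_of_nonneg_left hCS (by norm_num))).trans ?_
    simp only [← Real.sqrt_eq_rpow]
    rw [← Real.sqrt_mul hA0, ← Real.sqrt_mul hE0]
    apply Real.le_sqrt_of_sq_le
    rw [mul_pow, Real.sq_sqrt (by positivity), hE]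
    nlinarith
  refine abs_le_of_sq_le_sq ?_ (by positivity)
  refine hx2.trans (le_of_eq ?_)
  rw [mul_pow, ← Real.rpow_natCast, ← Real.rpow_natCast, ← Real.rpow_mul hE0, ← Real.rpow_mul hD0]
  norm_num

theorem deriv_Lp_le_energy_dissipation (p : ℝ≥0∞) (hp : 2 ≤ p) :
    ∃ C > (0:ℝ), ∀ g : ℝ → ℝ, ContDiffOn ℝ 3 g (Icc (-1) 1) →
      g (-1) = 0 → g 1 = 0 →
      eLpNorm (dI g) p (volume.restrict (Ioo (-1) 1)) ≤
        ENNReal.ofReal (C * energy g ^ ((1:ℝ)/4 + 1/(2 * p.toReal))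
          * dissipation g ^ ((1:ℝ)/4 - 1/(2 * p.toReal))) := by
  refine ⟨2 ^ (1 / p.toReal), by positivity, fun g hg h0 h1 => ?_⟩
  obtain ⟨cu, hE0, hD0, hM⟩ := aux_sup g hg h0 h1
  by_cases hpt : p = ⊤
  · subst hpt
    rw [eLpNorm_exponent_top]
    refine (eLpNormEssSup_le_of_ae_bound
      (C := energy g ^ ((1:ℝ)/4) * dissipation g ^ ((1:ℝ)/4)) ?_).trans (le_of_eq ?_)
    · exact (ae_restrict_iff' measurableSet_Ioo).2
        (Filter.Eventually.of_forall fun x hx => hM x (Ioo_subset_Icc_self hx))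
    · simp
  have hp0 : p ≠ 0 := by rintro rfl; simp at hp
  have hq : 2 ≤ p.toReal := by
    have := ENNReal.toReal_mono hpt hp
    simpa using this
  rw [eLpNorm_eq_lintegral_rpow_enorm_toReal hp0 hpt]
  set q := p.toReal with hqd
  have hq0 : 0 < q := by linarith
  set E := energy g with hEd
  set D := dissipation g with hDd
  set M := E ^ ((1:ℝ)/4) * D ^ ((1:ℝ)/4) with hMd
  have hM0 : 0 ≤ M := by positivity
  have hint : IntegrableOn (fun y => dI g y ^ 2) (Ioo (-1:ℝ) 1) :=
    ((cu.pow 2).integrableOn_Icc).mono_set Ioo_subset_Icc_self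
  have key : ∫⁻ x in Ioo (-1:ℝ) 1, ‖dI g x‖ₑ ^ q ≤ ENNReal.ofReal (M ^ (q - 2) * (2 * E)) := by
    have : M ^ (q - 2) * (2 * E) = ∫ x in Ioo (-1:ℝ) 1, M ^ (q - 2) * dI g x ^ 2 := by
      rw [integral_const_mul, hEd, energy]; ring
    rw [this, ofReal_integral_eq_lintegral_ofReal (hint.const_mul _)
      (Filter.Eventually.of_forall fun y => by positivity)]
    apply setLIntegral_mono' measurableSet_Ioo
    intro x hx
    rw [← ofReal_norm, ENNReal.ofReal_rpow_of_nonneg (norm_nonneg _) hq0.le]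
    apply ENNReal.ofReal_le_ofReal
    rw [Real.norm_eq_abs, ← sq_abs (dI g x)]
    have : |dI g x| ^ q = |dI g x| ^ (q - 2) * |dI g x| ^ 2 := by
      rw [← Real.rpow_natCast, ← Real.rpow_add_of_nonneg (abs_nonneg _) (by linarith) (by norm_num)]
      norm_num
    rw [this]
    gcongr
    exact hM x (Ioo_subset_Icc_self hx)
  refine (ENNReal.rpow_le_rpow key (by positivity)).trans ?_
  rw [ENNReal.ofReal_rpow_of_nonneg (by positivity) (by positivity)]
  apply ENNReal.ofReal_le_ofReal
  apply le_of_eq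
  have hq2 : 0 ≤ (1:ℝ)/4 - 1/(2*q) := by
    rw [sub_nonneg, div_le_div_iff₀ (by positivity) (by norm_num)]; linarith
  rw [Real.mul_rpow (by positivity) (by positivity), Real.mul_rpow (by norm_num) hE0,
    ← Real.rpow_mul hM0, hMd, Real.mul_rpow (by positivity) (by positivity),
    ← Real.rpow_mul hE0, ← Real.rpow_mul hD0]
  have e1 : (1:ℝ)/4 * ((q-2) * (1/q)) = 1/4 - 1/(2*q) := by field_simp; ring
  have e2 : (1:ℝ)/4 + 1/(2*q) = (1/4 - 1/(2*q)) + 1/q := by field_simp; ring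
  rw [e1, e2, Real.rpow_add_of_nonneg hE0 hq2 (by positivity)]
  ring
end

section
/- There exists a constant $C>0$ such that for every function $g$ three times continuously differentiable on $[-1,1]$ with $g(-1)=g(1)=0$, one has $\left(\int_{-1}^{1} (1-y^2)\, g''(y)^2\, dy\right)^{1/2} \le C\, E(g)^{1/4}\, D(g)^{1/4}$. -/
open MeasureTheory Set
open scoped ENNReal

/-- **Lemma 3.10 (iv)**: `‖√(1-y²) g''‖_{L²(-1,1)} ≲ E(g)^{1/4} D(g)^{1/4}`. -/
theorem weighted_second_deriv_L2 :
    ∃ C > (0:ℝ), ∀ g : ℝ → ℝ, ContDiffOn ℝ 3 g (Icc (-1) 1) →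
      g (-1) = 0 → g 1 = 0 →
      (∫ y in Ioo (-1:ℝ) 1, (1 - y ^ 2) * (dI (dI g) y) ^ 2) ^ ((1:ℝ)/2) ≤
        C * energy g ^ ((1:ℝ)/4) * dissipation g ^ ((1:ℝ)/4) := by
  refine ⟨2, by norm_num, fun g hg _ _ => ?_⟩
  have hU : UniqueDiffOn ℝ (Icc (-1:ℝ) 1) := uniqueDiffOn_Icc (by norm_num)
  have h1 : ContDiffOn ℝ 2 (dI g) (Icc (-1) 1) :=
    hg.derivWithin hU (by norm_num)
  have h2 : ContDiffOn ℝ 1 (dI (dI g)) (Icc (-1) 1) :=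
    h1.derivWithin hU (by norm_num)
  have h3 : ContDiffOn ℝ 0 (dI (dI (dI g))) (Icc (-1) 1) :=
    h2.derivWithin hU (by norm_num)
  have d1 : ∀ y ∈ Ioo (-1:ℝ) 1, HasDerivAt (dI g) (dI (dI g) y) y := fun y hy =>
    (((h1.differentiableOn (by norm_num)) y (Ioo_subset_Icc_self hy)).hasDerivWithinAt).hasDerivAt
      (Icc_mem_nhds hy.1 hy.2)
  have d2 : ∀ y ∈ Ioo (-1:ℝ) 1, HasDerivAt (dI (dI g)) (dI (dI (dI g)) y) y := fun y hy =>
    (((h2.differentiableOn (by norm_num)) y (Ioo_subset_Icc_self hy)).hasDerivWithinAt).hasDerivAt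
      (Icc_mem_nhds hy.1 hy.2)
  have c1 := h1.continuousOn
  have c2 := h2.continuousOn
  have c3 := h3.continuousOn
  unfold energy dissipation
  generalize dI (dI (dI g)) = w at *
  generalize dI (dI g) = v at *
  generalize dI g = u at *
  have key : ∀ f : ℝ → ℝ, ContinuousOn f (Icc (-1) 1) → IntegrableOn f (Ioo (-1:ℝ) 1) :=
    fun f hf => (hf.integrableOn_Icc).mono_set Ioo_subset_Icc_self
  have iI := key (fun y => (1 - y ^ 2) * (v y) ^ 2) (by fun_prop)
  have iA := key (fun y => (u y) ^ 2) (by fun_prop)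
  have iV := key (fun y => (v y) ^ 2) (by fun_prop)
  have iW := key (fun y => (1 - y ^ 2) * (w y) ^ 2) (by fun_prop)
  have iR := key (fun y => u y * (2 * y * v y - (1 - y ^ 2) * w y)) (by fun_prop)
  have parts : ∫ y in Ioo (-1:ℝ) 1, (1 - y ^ 2) * (v y) ^ 2
      = ∫ y in Ioo (-1:ℝ) 1, u y * (2 * y * v y - (1 - y ^ 2) * w y) := by
    have hF := intervalIntegral.integral_eq_sub_of_hasDerivAt_of_le (a := -1) (b := 1)
      (f := fun y => (1 - y ^ 2) * (u y * v y))
      (f' := fun y => (1 - y ^ 2) * (v y) ^ 2 - u y * (2 * y * v y - (1 - y ^ 2) * w y))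
      (by norm_num) (by fun_prop)
      (fun y hy => by
        have := (((hasDerivAt_id y).pow 2).const_sub 1).mul ((d1 y hy).mul (d2 y hy))
        refine (this.congr_deriv ?_)
        simp
        ring)
      (ContinuousOn.intervalIntegrable_of_Icc (by norm_num) (by fun_prop))
    rw [intervalIntegral.integral_of_le (by norm_num), integral_Ioc_eq_integral_Ioo,
      integral_sub iI iR] at hF
    norm_num at hF
    linarith
  have hsq : ∀ y ∈ Ioo (-1:ℝ) 1, 0 ≤ 1 - y ^ 2 := fun y hy => by nlinarith [hy.1, hy.2]
  have I0 : 0 ≤ ∫ y in Ioo (-1:ℝ) 1, (1 - y ^ 2) * (v y) ^ 2 :=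
    setIntegral_nonneg measurableSet_Ioo fun y hy => mul_nonneg (hsq y hy) (sq_nonneg _)
  have A0 : 0 ≤ ∫ y in Ioo (-1:ℝ) 1, (u y) ^ 2 :=
    setIntegral_nonneg measurableSet_Ioo fun y hy => sq_nonneg _
  have V0 : 0 ≤ ∫ y in Ioo (-1:ℝ) 1, (v y) ^ 2 :=
    setIntegral_nonneg measurableSet_Ioo fun y hy => sq_nonneg _
  have W0 : 0 ≤ ∫ y in Ioo (-1:ℝ) 1, (1 - y ^ 2) * (w y) ^ 2 :=
    setIntegral_nonneg measurableSet_Ioo fun y hy => mul_nonneg (hsq y hy) (sq_nonneg _)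
  have main : ∀ t : ℝ, 2 * t * (∫ y in Ioo (-1:ℝ) 1, (1 - y ^ 2) * (v y) ^ 2) ≤
      t ^ 2 * (∫ y in Ioo (-1:ℝ) 1, (u y) ^ 2) + (8 * (∫ y in Ioo (-1:ℝ) 1, (v y) ^ 2)
        + 2 * ∫ y in Ioo (-1:ℝ) 1, (1 - y ^ 2) * (w y) ^ 2) := by
    intro t
    have iS := key (fun y => 8 * (v y) ^ 2 + 2 * ((1 - y ^ 2) * (w y) ^ 2)) (by fun_prop)
    rw [parts, ← integral_const_mul, ← integral_const_mul, ← integral_const_mul,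
      ← integral_const_mul, ← integral_add (iV.const_mul 8) (iW.const_mul 2),
      ← integral_add (iA.const_mul _) iS]
    refine setIntegral_mono_on (iR.const_mul _)
      ((iA.const_mul _).add iS) measurableSet_Ioo ?_
    intro y hy
    have hy0 := hsq y hy
    have e1 := sq_nonneg (t * u y - (2 * y * v y - (1 - y ^ 2) * w y))
    have e2 := sq_nonneg (2 * y * v y + (1 - y ^ 2) * w y)
    have e3 := mul_nonneg hy0 (sq_nonneg (v y))
    have e4 := mul_nonneg (mul_nonneg hy0 (sq_nonneg y)) (sq_nonneg (w y))
    nlinarith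
  generalize (∫ y in Ioo (-1:ℝ) 1, (1 - y ^ 2) * (v y) ^ 2) = I at *
  generalize (∫ y in Ioo (-1:ℝ) 1, (1 - y ^ 2) * (w y) ^ 2) = W at *
  generalize (∫ y in Ioo (-1:ℝ) 1, (v y) ^ 2) = V at *
  generalize (∫ y in Ioo (-1:ℝ) 1, (u y) ^ 2) = A at *
  have hd := discrim_le_zero (a := A) (b := -2 * I) (c := 8 * V + 2 * W)
    (fun t => by nlinarith [main t])
  unfold discrim at hd
  have hAV := mul_nonneg A0 V0
  have hAW := mul_nonneg A0 W0
  have fin : I ^ 2 ≤ 2 ^ 4 * (1 / 2 * A) * (8 * V + 1 / 2 * W) := by nlinarith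
  have e2 : (2:ℝ) = (2 ^ 4 : ℝ) ^ ((1:ℝ) / 4) := by
    rw [← Real.rpow_natCast, ← Real.rpow_mul (by norm_num)]; norm_num
  have eI : I ^ ((1:ℝ) / 2) = (I ^ 2) ^ ((1:ℝ) / 4) := by
    rw [← Real.rpow_natCast, ← Real.rpow_mul I0]; norm_num
  calc I ^ ((1:ℝ) / 2) = (I ^ 2) ^ ((1:ℝ) / 4) := eI
    _ ≤ (2 ^ 4 * (1 / 2 * A) * (8 * V + 1 / 2 * W)) ^ ((1:ℝ) / 4) :=
      Real.rpow_le_rpow (sq_nonneg _) fin (by norm_num)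
    _ = (2 ^ 4 : ℝ) ^ ((1:ℝ) / 4) * (1 / 2 * A) ^ ((1:ℝ) / 4)
        * (8 * V + 1 / 2 * W) ^ ((1:ℝ) / 4) := by
      rw [Real.mul_rpow (by positivity) (by positivity),
        Real.mul_rpow (by positivity) (by positivity)]
    _ = _ := by rw [← e2]
end

section
/- For every $2 \le p < \infty$ there exists a constant $C = C(p) > 0$ such that for every function $g$ three times continuously differentiable on $[-1,1]$ with $g(-1)=g(1)=0$, one has $\|g''\|_{L^p(-1,1)} \le C\, D(g)^{1/2}$. -/
open MeasureTheory Set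
open scoped ENNReal

lemma aux_half (F F' : ℝ → ℝ) (hF : ContinuousOn F (Icc 0 1)) (hF' : ContinuousOn F' (Icc 0 1))
    (hd : ∀ t ∈ Ioo (0:ℝ) 1, HasDerivAt F (F' t) t) (s : ℝ) (hs : 0 < s)
    (h1 : ∫ t in (0:ℝ)..1, F t ^ 2 ≤ s ^ 2)
    (h2 : ∫ t in (0:ℝ)..1, (1 - t ^ 2) * F' t ^ 2 ≤ 2 * s ^ 2)
    (x : ℝ) (hx0 : 0 ≤ x) (hx1 : x < 1) :
    |F x| ≤ s * (3 - Real.log (1 - x)) := by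
  have u01 : uIcc (0:ℝ) 1 = Icc 0 1 := uIcc_of_le zero_le_one
  have i1 : IntervalIntegrable (fun t => F t ^ 2) volume 0 1 := by
    apply ContinuousOn.intervalIntegrable; rw [u01]; fun_prop
  have i2 : IntervalIntegrable (fun t => (1 - t ^ 2) * F' t ^ 2) volume 0 1 := by
    apply ContinuousOn.intervalIntegrable; rw [u01]; fun_prop
  have i3 : IntervalIntegrable (fun t => (-1) * F t ^ 2 + (1 - t) * (2 * F t * F' t)) volume 0 1 := by
    apply ContinuousOn.intervalIntegrable; rw [u01]; fun_prop
  have key0 : F 0 ^ 2 ≤ 4 * s ^ 2 := by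
    have e := intervalIntegral.integral_eq_sub_of_hasDerivAt_of_le zero_le_one
      (f := fun t => (1 - t) * F t ^ 2)
      (f' := fun t => (-1) * F t ^ 2 + (1 - t) * (2 * F t * F' t)) (by fun_prop)
      (fun t ht => by
        have a := ((hasDerivAt_id t).const_sub 1).mul ((hd t ht).pow 2)
        simpa [Pi.mul_def] using a) i3
    have m : ∫ t in (0:ℝ)..1, -(2 * F t ^ 2 + (1 - t ^ 2) * F' t ^ 2) ≤
        ∫ t in (0:ℝ)..1, ((-1) * F t ^ 2 + (1 - t) * (2 * F t * F' t)) := by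
      apply intervalIntegral.integral_mono_on zero_le_one ((i1.const_mul 2).add i2).neg i3
      intro t ht
      obtain ⟨ha, hb⟩ := ht
      have q1 : 0 ≤ (1 - t) * (F t + F' t) ^ 2 := mul_nonneg (by linarith) (sq_nonneg _)
      have q2 : 0 ≤ (t * (1 - t)) * F' t ^ 2 := mul_nonneg (mul_nonneg ha (by linarith)) (sq_nonneg _)
      have q3 : 0 ≤ t * F t ^ 2 := mul_nonneg ha (sq_nonneg _)
      simp only [Pi.neg_apply]
      nlinarith
    rw [intervalIntegral.integral_neg, intervalIntegral.integral_add (i1.const_mul 2) i2,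
      intervalIntegral.integral_const_mul] at m
    norm_num at e
    norm_num at m
    linarith
  have key0' : |F 0| ≤ 2 * s := abs_le_of_sq_le_sq (by linarith) (by linarith)
  have sub : Icc 0 x ⊆ Icc (0:ℝ) 1 := Icc_subset_Icc_right hx1.le
  have u0x : uIcc (0:ℝ) x = Icc 0 x := uIcc_of_le hx0
  have e : ∫ t in (0:ℝ)..x, F' t = F x - F 0 :=
    intervalIntegral.integral_eq_sub_of_hasDerivAt_of_le hx0 (hF.mono sub)
      (fun t ht => hd t ⟨ht.1, ht.2.trans hx1⟩)
      (ContinuousOn.intervalIntegrable (by rw [u0x]; exact hF'.mono sub))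
  have c4 : ContinuousOn (fun t : ℝ => (1 - t)⁻¹) (Icc 0 x) := by
    apply ContinuousOn.inv₀ (by fun_prop)
    intro t ht; have := ht.2; linarith
  have i4 : IntervalIntegrable (fun t : ℝ => (1 - t)⁻¹) volume 0 x :=
    ContinuousOn.intervalIntegrable (by rw [u0x]; exact c4)
  have i2x : IntervalIntegrable (fun t => (1 - t ^ 2) * F' t ^ 2) volume 0 x :=
    i2.mono_set (by rw [u0x, u01]; exact sub)
  have e4 : ∫ t in (0:ℝ)..x, (1 - t)⁻¹ = - Real.log (1 - x) := by
    have := intervalIntegral.integral_eq_sub_of_hasDerivAt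
      (f := fun t => - Real.log (1 - t)) (f' := fun t => (1 - t)⁻¹) (a := 0) (b := x)
      (fun t ht => by
        rw [u0x] at ht
        have hne : (1 - t) ≠ 0 := by have := ht.2; linarith
        have a := (((hasDerivAt_id t).const_sub 1).log hne).neg
        rw [id, neg_div, neg_neg, one_div] at a
        exact a) i4
    simpa using this
  have e2 : ∫ t in (0:ℝ)..x, (1 - t ^ 2) * F' t ^ 2 ≤ 2 * s ^ 2 := by
    refine le_trans ?_ h2
    apply intervalIntegral.integral_mono_interval le_rfl hx0 hx1.le _ i2
    rw [Filter.EventuallyLE, ae_restrict_iff' measurableSet_Ioc]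
    refine Filter.Eventually.of_forall fun t ht => ?_
    have : t ^ 2 ≤ 1 := by nlinarith [ht.1, ht.2]
    exact mul_nonneg (by linarith) (sq_nonneg _)
  have d : |∫ t in (0:ℝ)..x, F' t| ≤
      ∫ t in (0:ℝ)..x, (1 / (2 * s) * ((1 - t ^ 2) * F' t ^ 2) + s / 2 * (1 - t)⁻¹) := by
    rw [← Real.norm_eq_abs]
    apply intervalIntegral.norm_integral_le_of_norm_le hx0 _ ((i2x.const_mul _).add (i4.const_mul _))
    refine Filter.Eventually.of_forall fun t ht => ?_
    have hp : 0 < 1 - t := by have := ht.2; linarith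
    have : 1 / (2 * s) * ((1 - t) * F' t ^ 2) + s / 2 * (1 - t)⁻¹ - |F' t| =
        (1 - t) / (2 * s) * (|F' t| - s / (1 - t)) ^ 2 := by
      rw [← sq_abs (F' t)]
      field_simp
      ring
    have q : 0 ≤ (1 - t) / (2 * s) * (|F' t| - s / (1 - t)) ^ 2 := by positivity
    have r : 1 / (2 * s) * ((1 - t) * F' t ^ 2) ≤ 1 / (2 * s) * ((1 - t ^ 2) * F' t ^ 2) := by
      gcongr
      nlinarith [ht.1]
    rw [Real.norm_eq_abs]
    linarith
  rw [intervalIntegral.integral_add (i2x.const_mul _) (i4.const_mul _),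
    intervalIntegral.integral_const_mul, intervalIntegral.integral_const_mul, e, e4] at d
  have hl : Real.log (1 - x) ≤ 0 := Real.log_nonpos (by linarith) (by linarith)
  have d2 : 1 / (2 * s) * (∫ t in (0:ℝ)..x, (1 - t ^ 2) * F' t ^ 2) ≤ s := by
    calc _ ≤ 1 / (2 * s) * (2 * s ^ 2) := by gcongr
      _ = s := by field_simp
  have tri : |F x| ≤ |F x - F 0| + |F 0| := by
    have := abs_add_le (F x - F 0) (F 0); simpa using this
  nlinarith [mul_nonneg hs.le (neg_nonneg.2 hl)]

lemma aux_log (p u : ℝ) (hp : 2 ≤ p) (h0 : 0 < u) (h1 : u ≤ 1) :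
    3 - Real.log u ≤ (3 + 2 * p) * u ^ (-(1 / (2 * p))) := by
  have hε : 0 < 1 / (2 * p) := by positivity
  have a := Real.log_le_rpow_div (inv_pos.2 h0).le hε
  rw [Real.log_inv, Real.inv_rpow h0.le, ← Real.rpow_neg h0.le] at a
  have b : 1 ≤ u ^ (-(1 / (2 * p))) := Real.one_le_rpow_of_pos_of_le_one_of_nonpos h0 h1 (by linarith)
  have c : u ^ (-(1 / (2 * p))) / (1 / (2 * p)) = 2 * p * u ^ (-(1 / (2 * p))) := by
    field_simp
  rw [c] at a
  linarith

lemma aux_int1 : IntegrableOn (fun x : ℝ => (1 - x) ^ (-(1/2) : ℝ)) (Ioo (-1) 1) := by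
  have h := (intervalIntegral.intervalIntegrable_rpow' (a := 2) (b := 0) (r := (-(1/2) : ℝ))
    (by norm_num)).comp_sub_left 1
  norm_num at h
  have := (intervalIntegrable_iff_integrableOn_Ioo_of_le (by norm_num)).1 h
  norm_num
  exact this

lemma aux_int2 : IntegrableOn (fun x : ℝ => (1 + x) ^ (-(1/2) : ℝ)) (Ioo (-1) 1) := by
  have h := (intervalIntegral.intervalIntegrable_rpow' (a := 0) (b := 2) (r := (-(1/2) : ℝ))
    (by norm_num)).comp_add_left 1
  norm_num at h
  have := (intervalIntegrable_iff_integrableOn_Ioo_of_le (by norm_num)).1 h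
  norm_num
  exact this

lemma aux_mem (p : ℝ) (hp : 2 ≤ p) (v : ℝ → ℝ) (hv : Continuous v)
    (hpos : ∀ x ∈ Ioo (-1:ℝ) 1, 0 < v x)
    (hi : IntegrableOn (fun x : ℝ => (v x) ^ (-(1/2) : ℝ)) (Ioo (-1) 1)) :
    MemLp (fun x => (v x) ^ (-(1 / (2 * p)))) (ENNReal.ofReal p) (volume.restrict (Ioo (-1) 1)) := by
  have hm : AEStronglyMeasurable (fun x => (v x) ^ (-(1 / (2 * p)))) (volume.restrict (Ioo (-1) 1)) :=
    (hv.measurable.pow_const _).aestronglyMeasurable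
  rw [← integrable_norm_rpow_iff hm (by simp; linarith) (by simp)]
  refine Integrable.congr hi ?_
  rw [Filter.EventuallyEq, ae_restrict_iff' measurableSet_Ioo]
  refine Filter.Eventually.of_forall fun x hx => ?_
  have h := hpos x hx
  rw [ENNReal.toReal_ofReal (by linarith), Real.norm_of_nonneg (by positivity),
    ← Real.rpow_mul h.le]
  congr 1
  field_simp

lemma aux_point (g : ℝ → ℝ) (hg : ContDiffOn ℝ 3 g (Icc (-1) 1)) (s : ℝ) (hs : 0 < s)
    (hD : dissipation g ≤ s ^ 2) (x : ℝ) (hx : x ∈ Ioo (-1:ℝ) 1) :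
    |dI (dI g) x| ≤ s * (3 - Real.log (1 - |x|)) := by
  have hu : UniqueDiffOn ℝ (Icc (-1:ℝ) 1) := uniqueDiffOn_Icc (by norm_num)
  have g1 : ContDiffOn ℝ 2 (dI g) (Icc (-1) 1) := hg.derivWithin hu (by norm_num)
  have g2 : ContDiffOn ℝ 1 (dI (dI g)) (Icc (-1) 1) := g1.derivWithin hu (by norm_num)
  have g3 : ContDiffOn ℝ 0 (dI (dI (dI g))) (Icc (-1) 1) := g2.derivWithin hu (by norm_num)
  unfold dissipation at hD
  have hd : ∀ t ∈ Ioo (-1:ℝ) 1, HasDerivAt (dI (dI g)) (dI (dI (dI g)) t) t := by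
    intro t ht
    have := (g2.differentiableOn (by norm_num) t (Ioo_subset_Icc_self ht)).hasDerivWithinAt
    exact this.hasDerivAt (Icc_mem_nhds ht.1 ht.2)
  generalize dI (dI (dI g)) = f' at *
  generalize dI (dI g) = f at *
  have c : ContinuousOn f (Icc (-1) 1) := g2.continuousOn
  have c' : ContinuousOn f' (Icc (-1) 1) := g3.continuousOn
  have i1 : IntervalIntegrable (fun y => f y ^ 2) volume (-1) 1 := by
    apply ContinuousOn.intervalIntegrable; rw [uIcc_of_le (by norm_num)]; fun_prop
  have i2 : IntervalIntegrable (fun y => (1 - y ^ 2) * f' y ^ 2) volume (-1) 1 := by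
    apply ContinuousOn.intervalIntegrable; rw [uIcc_of_le (by norm_num)]; fun_prop
  rw [← integral_Ioc_eq_integral_Ioo, ← integral_Ioc_eq_integral_Ioo,
    ← intervalIntegral.integral_of_le (by norm_num), ← intervalIntegral.integral_of_le (by norm_num)] at hD
  have n1 : ∀ t ∈ Icc (-1:ℝ) 1, 0 ≤ f t ^ 2 := fun t _ => sq_nonneg _
  have n2 : ∀ t ∈ Icc (-1:ℝ) 1, 0 ≤ (1 - t ^ 2) * f' t ^ 2 := fun t ht =>
    mul_nonneg (by nlinarith [ht.1, ht.2]) (sq_nonneg _)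
  have N1 : 0 ≤ ∫ y in (-1:ℝ)..1, f y ^ 2 := intervalIntegral.integral_nonneg (by norm_num) n1
  have N2 : 0 ≤ ∫ y in (-1:ℝ)..1, (1 - y ^ 2) * f' y ^ 2 :=
    intervalIntegral.integral_nonneg (by norm_num) n2
  have mono : ∀ (h : ℝ → ℝ), IntervalIntegrable h volume (-1) 1 → (∀ t ∈ Icc (-1:ℝ) 1, 0 ≤ h t) →
      ∀ a b : ℝ, -1 ≤ a → a ≤ b → b ≤ 1 → ∫ t in a..b, h t ≤ ∫ t in (-1:ℝ)..1, h t := by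
    intro h hi hn a b h1 h2 h3
    apply intervalIntegral.integral_mono_interval h1 h2 h3 _ hi
    rw [Filter.EventuallyLE, ae_restrict_iff' measurableSet_Ioc]
    exact Filter.Eventually.of_forall fun t ht => hn t (Ioc_subset_Icc_self ht)
  rcases le_total 0 x with h0 | h0
  · rw [abs_of_nonneg h0]
    have sub : Icc (0:ℝ) 1 ⊆ Icc (-1) 1 := Icc_subset_Icc_left (by norm_num)
    apply aux_half f f' (c.mono sub) (c'.mono sub)
      (fun t ht => hd t ⟨by linarith [ht.1], ht.2⟩) s hs _ _ x h0 hx.2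
    · have := mono _ i1 n1 0 1 (by norm_num) (by norm_num) le_rfl; linarith
    · have := mono _ i2 n2 0 1 (by norm_num) (by norm_num) le_rfl; linarith
  · rw [abs_of_nonpos h0]
    have mt : MapsTo (fun t : ℝ => -t) (Icc (0:ℝ) 1) (Icc (-1) 1) := fun t ht =>
      ⟨by linarith [ht.2], by linarith [ht.1]⟩
    have := aux_half (fun t => f (-t)) (fun t => - f' (-t)) (c.comp (by fun_prop) mt)
      (c'.comp (by fun_prop) mt).neg
      (fun t ht => by
        have a := (hd (-t) ⟨by linarith [ht.2], by linarith [ht.1]⟩).comp t (hasDerivAt_neg t)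
        simpa [Function.comp_def] using a) s hs ?_ ?_ (-x) (by linarith) (by linarith [hx.1])
    · simpa using this
    · have a := mono _ i1 n1 (-1) 0 (by norm_num) (by norm_num) (by norm_num)
      have b := intervalIntegral.integral_comp_neg (a := 0) (b := 1) (fun y => f y ^ 2)
      simp only [neg_zero] at b
      rw [b]; linarith
    · have a := mono _ i2 n2 (-1) 0 (by norm_num) (by norm_num) (by norm_num)
      have b := intervalIntegral.integral_comp_neg (a := 0) (b := 1) (fun y => (1 - y ^ 2) * f' y ^ 2)
      simp only [neg_zero, neg_sq] at b ⊢
      rw [b]; linarith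

/-- **Lemma 3.10 (v)**: for `2 ≤ p < ∞`, `‖g''‖_{L^p(-1,1)} ≲ D(g)^{1/2}`. -/
theorem second_deriv_Lp_le_dissipation (p : ℝ) (hp : 2 ≤ p) :
    ∃ C > (0:ℝ), ∀ g : ℝ → ℝ, ContDiffOn ℝ 3 g (Icc (-1) 1) →
      g (-1) = 0 → g 1 = 0 →
      eLpNorm (dI (dI g)) (ENNReal.ofReal p) (volume.restrict (Ioo (-1) 1)) ≤
        ENNReal.ofReal (C * dissipation g ^ ((1:ℝ)/2)) := by
  set W : ℝ → ℝ := fun x => (3 + 2 * p) *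
    ((1 - x) ^ (-(1 / (2 * p))) + (1 + x) ^ (-(1 / (2 * p)))) with hW
  have hWm : MemLp W (ENNReal.ofReal p) (volume.restrict (Ioo (-1) 1)) := by
    apply MemLp.const_mul
    exact (aux_mem p hp (fun x => 1 - x) (by fun_prop) (fun x hx => by linarith [hx.2]) aux_int1).add
      (aux_mem p hp (fun x => 1 + x) (by fun_prop) (fun x hx => by linarith [hx.1]) aux_int2)
  set K := eLpNorm W (ENNReal.ofReal p) (volume.restrict (Ioo (-1) 1)) with hK
  refine ⟨K.toReal + 1, by positivity, fun g hg _ _ => ?_⟩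
  set r := dissipation g ^ ((1:ℝ)/2) with hr
  have hD0 : 0 ≤ dissipation g := by
    unfold dissipation
    have a : 0 ≤ ∫ y in Ioo (-1:ℝ) 1, (dI (dI g) y) ^ 2 := integral_nonneg fun y => sq_nonneg _
    have b : 0 ≤ ∫ y in Ioo (-1:ℝ) 1, (1 - y ^ 2) * (dI (dI (dI g)) y) ^ 2 :=
      setIntegral_nonneg measurableSet_Ioo fun y hy =>
        mul_nonneg (by nlinarith [hy.1, hy.2]) (sq_nonneg _)
    positivity
  have hr0 : 0 ≤ r := by positivity
  have hr2 : r ^ 2 = dissipation g := by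
    rw [hr, ← Real.sqrt_eq_rpow, Real.sq_sqrt hD0]
  have pt : ∀ x ∈ Ioo (-1:ℝ) 1, |dI (dI g) x| ≤ r * W x := by
    intro x hx
    have hpos1 : 0 < 1 - x := by linarith [hx.2]
    have hpos2 : 0 < 1 + x := by linarith [hx.1]
    have hxa : |x| < 1 := abs_lt.2 hx
    have l := aux_log p (1 - |x|) hp (by linarith) (by linarith [abs_nonneg x])
    have lW : 3 - Real.log (1 - |x|) ≤ W x := by
      refine l.trans ?_
      rw [hW]
      simp only
      have a1 : 0 ≤ (1 - x) ^ (-(1 / (2 * p))) := by positivity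
      have a2 : 0 ≤ (1 + x) ^ (-(1 / (2 * p))) := by positivity
      gcongr
      rcases abs_cases x with ⟨h, _⟩ | ⟨h, _⟩ <;> rw [h]
      · linarith
      · rw [sub_neg_eq_add]; linarith
    have hWx : 0 ≤ W x := by positivity
    have lim : ∀ δ > 0, |dI (dI g) x| ≤ (r + δ) * W x := fun δ hδ =>
      (aux_point g hg (r + δ) (by linarith) (by rw [← hr2]; nlinarith) x hx).trans (by gcongr)
    apply le_of_forall_pos_le_add
    intro η hη
    refine (lim (η / (W x + 1)) (by positivity)).trans ?_
    rw [add_mul]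
    gcongr
    rw [div_mul_eq_mul_div, div_le_iff₀ (by positivity)]
    nlinarith
  calc eLpNorm (dI (dI g)) (ENNReal.ofReal p) (volume.restrict (Ioo (-1) 1))
      ≤ ENNReal.ofReal r * K := by
        apply eLpNorm_le_mul_eLpNorm_of_ae_le_mul
        rw [ae_restrict_iff' measurableSet_Ioo]
        refine Filter.Eventually.of_forall fun x hx => ?_
        rw [Real.norm_eq_abs]
        exact (pt x hx).trans (by gcongr; exact Real.le_norm_self _)
    _ = ENNReal.ofReal (K.toReal * r) := by
        rw [mul_comm, ENNReal.ofReal_mul (by positivity), ENNReal.ofReal_toReal hWm.2.ne]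
    _ ≤ _ := by
        apply ENNReal.ofReal_le_ofReal
        gcongr
        linarith
end

section
/- For every $\epsilon > 0$ there exists a constant $C = C(\epsilon) > 0$ such that for every function $g$ three times continuously differentiable on $[-1,1]$ with $g(-1)=g(1)=0$, one has $\sup_{y \in (-1,1)} (1-y^2)^{\epsilon}\, |g''(y)| \le C\, D(g)^{1/2}$. -/
open MeasureTheory Set
open scoped ENNReal

noncomputable def TT (t : ℝ) : ℝ := (Real.log (1 + t) - Real.log (1 - t)) / 2

lemma TT_deriv {t : ℝ} (h1 : -1 < t) (h2 : t < 1) : HasDerivAt TT (1 / (1 - t ^ 2)) t := by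
  have ha : (1 + t) ≠ 0 := by linarith
  have hb : (1 - t) ≠ 0 := by linarith
  have hc : (1 - t ^ 2) ≠ 0 := by nlinarith
  have e1 : HasDerivAt (fun t : ℝ => Real.log (1 + t)) (1 / (1 + t)) t :=
    ((hasDerivAt_id t).const_add 1).log ha
  have e2 : HasDerivAt (fun t : ℝ => Real.log (1 - t)) (-1 / (1 - t)) t :=
    ((hasDerivAt_id t).const_sub 1).log hb
  have := (e1.sub e2).div_const 2
  refine HasDerivAt.congr_deriv (f' := (1 / (1 + t) - -1 / (1 - t)) / 2) this ?_
  have : 1 - t ^ 2 = (1 + t) * (1 - t) := by ring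
  rw [this]
  field_simp
  ring

lemma key {f f' : ℝ → ℝ} (hf : ∀ t ∈ Ioo (-1 : ℝ) 1, HasDerivAt f (f' t) t)
    (hc : ContinuousOn f' (Icc (-1) 1)) {a b : ℝ} (ha : -1 < a) (hab : a ≤ b) (hb : b < 1) :
    (f b - f a) ^ 2 ≤ (∫ y in Ioo (-1 : ℝ) 1, (1 - y ^ 2) * f' y ^ 2) * (TT b - TT a) := by
  set B := ∫ y in Ioo (-1 : ℝ) 1, (1 - y ^ 2) * f' y ^ 2 with hB
  have hsub : uIcc a b ⊆ Ioo (-1 : ℝ) 1 := by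
    rw [uIcc_of_le hab]; exact fun t ht => ⟨by linarith [ht.1], by linarith [ht.2]⟩
  have hc' : ContinuousOn f' (uIcc a b) := hc.mono (hsub.trans Ioo_subset_Icc_self)
  have hne : ∀ t ∈ uIcc a b, 1 - t ^ 2 ≠ 0 := fun t ht => by
    have := hsub ht; nlinarith [this.1, this.2]
  have i1 : IntervalIntegrable (fun y => (1 - y ^ 2) * f' y ^ 2) volume a b :=
    ContinuousOn.intervalIntegrable (by fun_prop)
  have i2 : IntervalIntegrable f' volume a b := hc'.intervalIntegrable
  have i3 : IntervalIntegrable (fun y : ℝ => 1 / (1 - y ^ 2)) volume a b :=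
    ContinuousOn.intervalIntegrable (ContinuousOn.div (by fun_prop) (by fun_prop) hne)
  have e2 : ∫ y in a..b, f' y = f b - f a :=
    intervalIntegral.integral_eq_sub_of_hasDerivAt (fun t ht => hf t (hsub ht)) i2
  have e3 : ∫ y in a..b, 1 / (1 - y ^ 2) = TT b - TT a :=
    intervalIntegral.integral_eq_sub_of_hasDerivAt
      (fun t ht => TT_deriv (hsub ht).1 (hsub ht).2) i3
  have iB : IntegrableOn (fun y => (1 - y ^ 2) * f' y ^ 2) (Ioo (-1 : ℝ) 1) := by
    refine IntegrableOn.mono_set (t := Icc (-1) 1) ?_ Ioo_subset_Icc_self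
    exact ContinuousOn.integrableOn_Icc (by fun_prop)
  have e1 : ∫ y in a..b, (1 - y ^ 2) * f' y ^ 2 ≤ B := by
    rw [intervalIntegral.integral_of_le hab]
    refine setIntegral_mono_set iB ?_ ?_
    · refine (ae_restrict_iff' measurableSet_Ioo).2 (Filter.Eventually.of_forall fun t ht => ?_)
      have : 0 ≤ 1 - t ^ 2 := by nlinarith [ht.1, ht.2]
      exact mul_nonneg this (sq_nonneg _)
    · exact HasSubset.Subset.eventuallyLE
        (fun t ht => ⟨by linarith [ht.1], by linarith [ht.2]⟩)
  have hq : ∀ l : ℝ, 0 ≤ B * (l * l) + (-2 * (f b - f a)) * l + (TT b - TT a) := by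
    intro l
    have h0 : 0 ≤ ∫ y in a..b, (l ^ 2 * ((1 - y ^ 2) * f' y ^ 2) - (2 * l) * f' y
        + 1 / (1 - y ^ 2)) := by
      refine intervalIntegral.integral_nonneg hab fun t ht => ?_
      have ht' := hsub (by rwa [uIcc_of_le hab])
      have : 0 < 1 - t ^ 2 := by nlinarith [ht'.1, ht'.2]
      have e : l ^ 2 * ((1 - t ^ 2) * f' t ^ 2) - (2 * l) * f' t + 1 / (1 - t ^ 2)
        = (l * (1 - t ^ 2) * f' t - 1) ^ 2 / (1 - t ^ 2) := by
        field_simp; ring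
      rw [e]; positivity
    rw [intervalIntegral.integral_add ((i1.const_mul _).sub (i2.const_mul _)) i3,
      intervalIntegral.integral_sub (i1.const_mul _) (i2.const_mul _),
      intervalIntegral.integral_const_mul, intervalIntegral.integral_const_mul, e2, e3] at h0
    nlinarith [mul_le_mul_of_nonneg_left e1 (sq_nonneg l)]
  have := discrim_le_zero hq
  unfold discrim at this
  nlinarith

lemma key2 {f f' : ℝ → ℝ} (hf : ∀ t ∈ Ioo (-1 : ℝ) 1, HasDerivAt f (f' t) t)
    (hc : ContinuousOn f' (Icc (-1) 1)) {a b : ℝ} (ha : a ∈ Ioo (-1 : ℝ) 1)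
    (hb : b ∈ Ioo (-1 : ℝ) 1) :
    (f b - f a) ^ 2 ≤ (∫ y in Ioo (-1 : ℝ) 1, (1 - y ^ 2) * f' y ^ 2) * (|TT b| + |TT a|) := by
  have hB : 0 ≤ ∫ y in Ioo (-1 : ℝ) 1, (1 - y ^ 2) * f' y ^ 2 :=
    setIntegral_nonneg measurableSet_Ioo fun t ht =>
      mul_nonneg (by nlinarith [ht.1, ht.2]) (sq_nonneg _)
  rcases le_total a b with h | h
  · refine (key hf hc ha.1 h hb.2).trans (mul_le_mul_of_nonneg_left ?_ hB)
    linarith [le_abs_self (TT b), neg_abs_le (TT a)]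
  · have := key hf hc hb.1 h ha.2
    have e : (f b - f a) ^ 2 = (f a - f b) ^ 2 := by ring
    rw [e]
    refine this.trans (mul_le_mul_of_nonneg_left ?_ hB)
    linarith [le_abs_self (TT a), neg_abs_le (TT b)]

lemma TT_small {x : ℝ} (h1 : -(1/2) ≤ x) (h2 : x ≤ 1/2) : |TT x| ≤ 1 := by
  have aux : ∀ z : ℝ, 1/2 ≤ z → z ≤ 3/2 → -1 ≤ Real.log z ∧ Real.log z ≤ 1/2 := by
    intro z hz hz'
    have hp : 0 < z := by linarith
    have a := Real.log_le_sub_one_of_pos hp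
    have b := Real.one_sub_inv_le_log_of_pos hp
    have c : z⁻¹ ≤ 2 := by rw [inv_le_comm₀ hp (by norm_num)]; linarith
    constructor <;> linarith
  have a := aux (1 + x) (by linarith) (by linarith)
  have b := aux (1 - x) (by linarith) (by linarith)
  unfold TT
  rw [abs_le]; constructor <;> linarith [a.1, a.2, b.1, b.2]

lemma TT_big {y ε : ℝ} (hε : 0 < ε) (hy : y ∈ Ioo (-1 : ℝ) 1) :
    (1 - y ^ 2) ^ ε * |TT y| ≤ 4 ^ ε / ε := by
  have hw : 0 < 1 - y ^ 2 := by nlinarith [hy.1, hy.2]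
  have p1 : 0 < 1 + y := by linarith [hy.1]
  have p2 : 0 < 1 - y := by linarith [hy.2]
  have hl : Real.log (1 - y ^ 2) = Real.log (1 + y) + Real.log (1 - y) := by
    rw [← Real.log_mul p1.ne' p2.ne']; congr 1; ring
  have hd : Real.log (4 / (1 - y ^ 2)) = Real.log 4 - Real.log (1 - y ^ 2) :=
    Real.log_div (by norm_num) hw.ne'
  have h4 : Real.log 4 = 2 * Real.log 2 := by
    rw [show (4 : ℝ) = 2 ^ 2 by norm_num, Real.log_pow]; norm_num
  have b1 : Real.log (1 + y) ≤ Real.log 2 := Real.log_le_log p1 (by linarith [hy.2])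
  have b2 : Real.log (1 - y) ≤ Real.log 2 := Real.log_le_log p2 (by linarith [hy.1])
  have hn : 0 ≤ Real.log (4 / (1 - y ^ 2)) := by rw [hd, hl]; linarith
  have hT : |TT y| ≤ Real.log (4 / (1 - y ^ 2)) := by
    have h2 : |TT y| ≤ Real.log (4 / (1 - y ^ 2)) / 2 := by
      rw [hd, hl, h4]; unfold TT
      rw [abs_le]; constructor <;> linarith
    linarith
  have hlog := Real.log_le_rpow_div (x := 4 / (1 - y ^ 2)) (by positivity) hε
  calc (1 - y ^ 2) ^ ε * |TT y| ≤ (1 - y ^ 2) ^ ε * ((4 / (1 - y ^ 2)) ^ ε / ε) :=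
        mul_le_mul_of_nonneg_left (hT.trans hlog) (by positivity)
    _ = 4 ^ ε / ε := by
      rw [Real.div_rpow (by norm_num) hw.le]
      have : (1 - y ^ 2) ^ ε ≠ 0 := by positivity
      field_simp

lemma exists_small {f : ℝ → ℝ} (hc : ContinuousOn f (Icc (-1) 1)) :
    ∃ x ∈ Icc (-(1/2) : ℝ) (1/2), f x ^ 2 ≤ ∫ y in Ioo (-1 : ℝ) 1, f y ^ 2 := by
  by_contra! h
  set A := ∫ y in Ioo (-1 : ℝ) 1, f y ^ 2 with hA
  have hs : Icc (-(1/2) : ℝ) (1/2) ⊆ Ioo (-1) 1 := fun t ht =>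
    ⟨by linarith [ht.1], by linarith [ht.2]⟩
  have iB : IntegrableOn (fun y => f y ^ 2) (Ioo (-1 : ℝ) 1) := by
    refine IntegrableOn.mono_set (t := Icc (-1) 1) ?_ Ioo_subset_Icc_self
    exact ContinuousOn.integrableOn_Icc (by fun_prop)
  have h1 : ∫ y in Icc (-(1/2) : ℝ) (1/2), f y ^ 2 ≤ A :=
    setIntegral_mono_set iB (Filter.Eventually.of_forall fun t => sq_nonneg _) hs.eventuallyLE
  obtain ⟨z, hz, hmin⟩ := isCompact_Icc.exists_isMinOn
    (s := Icc (-(1/2) : ℝ) (1/2)) ⟨0, by norm_num⟩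
    ((hc.mono (hs.trans Ioo_subset_Icc_self)).pow 2)
  have h2 : ∫ y in Icc (-(1/2) : ℝ) (1/2), f z ^ 2 ≤ ∫ y in Icc (-(1/2) : ℝ) (1/2), f y ^ 2 :=
    setIntegral_mono_on (by simp) (iB.mono_set hs) measurableSet_Icc (fun t ht => hmin ht)
  rw [setIntegral_const] at h2
  norm_num [Measure.real, Real.volume_Icc] at h2
  have := h z hz
  norm_num at h1
  linarith

theorem weighted_second_deriv_sup (ε : ℝ) (hε : 0 < ε) :
    ∃ C > (0:ℝ), ∀ g : ℝ → ℝ, ContDiffOn ℝ 3 g (Icc (-1) 1) →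
      g (-1) = 0 → g 1 = 0 →
      ∀ y ∈ Ioo (-1:ℝ) 1, (1 - y ^ 2) ^ ε * |dI (dI g) y| ≤
        C * dissipation g ^ ((1:ℝ)/2) := by
  set M : ℝ := 4 ^ (2 * ε) / (2 * ε) with hM
  have hM0 : 0 < M := by positivity
  refine ⟨√(4 + 4 * M), by positivity, fun g hg _ _ y hy => ?_⟩
  have hu : UniqueDiffOn ℝ (Icc (-1 : ℝ) 1) := uniqueDiffOn_Icc (by norm_num)
  have g1 : ContDiffOn ℝ 2 (dI g) (Icc (-1) 1) := hg.derivWithin hu (by norm_num)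
  have g2 : ContDiffOn ℝ 1 (dI (dI g)) (Icc (-1) 1) := g1.derivWithin hu (by norm_num)
  have g3 : ContDiffOn ℝ 0 (dI (dI (dI g))) (Icc (-1) 1) := g2.derivWithin hu (by norm_num)
  unfold dissipation
  set f := dI (dI g) with hf
  have hd : ∀ t ∈ Ioo (-1 : ℝ) 1, HasDerivAt f (dI f t) t := fun t ht =>
    ((g2.differentiableOn (by norm_num)) t (Ioo_subset_Icc_self ht)).hasDerivWithinAt.hasDerivAt
      (Icc_mem_nhds ht.1 ht.2)
  obtain ⟨x, hx, hfx⟩ := exists_small g2.continuousOn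
  have hk := key2 hd g3.continuousOn (a := x) (b := y)
    ⟨by linarith [hx.1], by linarith [hx.2]⟩ hy
  have hA0 : 0 ≤ ∫ y in Ioo (-1 : ℝ) 1, f y ^ 2 := integral_nonneg fun t => sq_nonneg _
  have hB0 : 0 ≤ ∫ y in Ioo (-1 : ℝ) 1, (1 - y ^ 2) * dI f y ^ 2 :=
    setIntegral_nonneg measurableSet_Ioo fun t ht =>
      mul_nonneg (by nlinarith [ht.1, ht.2]) (sq_nonneg _)
  set A := ∫ y in Ioo (-1 : ℝ) 1, f y ^ 2
  set B := ∫ y in Ioo (-1 : ℝ) 1, (1 - y ^ 2) * dI f y ^ 2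
  have hw : 0 < 1 - y ^ 2 := by nlinarith [hy.1, hy.2]
  have hT := TT_big (ε := 2 * ε) (by linarith) hy
  have hTx := TT_small hx.1 hx.2
  have hW1 : (1 - y ^ 2) ^ (2 * ε) ≤ 1 :=
    Real.rpow_le_one hw.le (by nlinarith [sq_nonneg y]) (by linarith)
  have hW0 : 0 < (1 - y ^ 2) ^ (2 * ε) := by positivity
  have hWW : ((1 - y ^ 2) ^ ε) ^ 2 = (1 - y ^ 2) ^ (2 * ε) := by
    rw [← Real.rpow_natCast, ← Real.rpow_mul hw.le]; congr 1; push_cast; ring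
  rw [← Real.sqrt_eq_rpow, ← Real.sqrt_mul (by positivity)]
  apply Real.le_sqrt_of_sq_le
  rw [mul_pow, sq_abs, hWW]
  set W := (1 - y ^ 2) ^ (2 * ε)
  have hfy : f y ^ 2 ≤ 2 * A + 2 * (B * (|TT y| + 1)) := by
    have : B * (|TT y| + |TT x|) ≤ B * (|TT y| + 1) := by gcongr
    nlinarith [sq_nonneg (f y - 2 * f x)]
  calc W * f y ^ 2 ≤ W * (2 * A + 2 * (B * (|TT y| + 1))) := by gcongr
    _ = W * (2 * A + 2 * B) + 2 * B * (W * |TT y|) := by ring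
    _ ≤ 1 * (2 * A + 2 * B) + 2 * B * M := by gcongr
    _ ≤ _ := by nlinarith [mul_nonneg hM0.le hA0, mul_nonneg hM0.le hB0]
end

section
/- There exists a constant $C>0$ such that for every function $g$ three times continuously differentiable on $[-1,1]$ with $g(-1)=g(1)=0$ and every $y \in (-1,1)$, one has $|g''(y)| \le C\, D(g)^{1/2}\left(1 + \left|\log\left(\frac{1+y}{1-y}\right)\right|^{1/2}\right)$. -/
open MeasureTheory Set
open scoped ENNReal

theorem aux_CS (h k : ℝ → ℝ) (hh : ∀ y ∈ Ioo (-1:ℝ) 1, HasDerivAt h (k y) y)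
    (hk : ContinuousOn k (Icc (-1) 1)) (a b : ℝ) (ha : -1 < a) (hab : a ≤ b) (hb : b < 1) :
    (h b - h a) ^ 2 ≤ (∫ y in Ioo (-1:ℝ) 1, (1 - y ^ 2) * (k y) ^ 2) *
      ((Real.log ((1 + b) / (1 - b)) - Real.log ((1 + a) / (1 - a))) / 2) := by
  have hsub : Icc a b ⊆ Ioo (-1:ℝ) 1 := fun y hy => ⟨by linarith [hy.1], by linarith [hy.2]⟩
  have hu : uIcc a b = Icc a b := uIcc_of_le hab
  have hkc : ContinuousOn k (uIcc a b) := by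
    rw [hu]; exact hk.mono (hsub.trans Ioo_subset_Icc_self)
  have hpos : ∀ y ∈ Icc a b, 0 < 1 - y ^ 2 := fun y hy => by
    have := hsub hy
    nlinarith [this.1, this.2]
  have hic : ContinuousOn (fun y : ℝ => 1 / (1 - y ^ 2)) (uIcc a b) := by
    rw [hu]
    exact ContinuousOn.div (by fun_prop) (by fun_prop) (fun y hy => (hpos y hy).ne')
  have hqc : ContinuousOn (fun y : ℝ => (1 - y ^ 2) * (k y) ^ 2) (uIcc a b) :=
    ContinuousOn.mul (by fun_prop) (hkc.pow 2)
  have I1 : ∫ y in a..b, k y = h b - h a :=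
    intervalIntegral.integral_eq_sub_of_hasDerivAt
      (fun y hy => hh y (hsub (hu ▸ hy))) hkc.intervalIntegrable
  have I2 : ∫ y in a..b, 1 / (1 - y ^ 2) =
      (Real.log ((1 + b) / (1 - b)) - Real.log ((1 + a) / (1 - a))) / 2 := by
    rw [sub_div]
    refine intervalIntegral.integral_eq_sub_of_hasDerivAt
      (f := fun y => Real.log ((1 + y) / (1 - y)) / 2) (fun y hy => ?_) hic.intervalIntegrable
    rw [hu] at hy
    have h0 := hsub hy
    have h1 : (1 + y) ≠ 0 := by linarith [h0.1]
    have h2 : (1 - y) ≠ 0 := by linarith [h0.2]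
    have h3 := (hpos y hy).ne'
    have d := ((((hasDerivAt_id y).const_add 1).div ((hasDerivAt_id y).const_sub 1) h2).log
      (div_ne_zero h1 h2)).div_const 2
    refine HasDerivAt.congr_deriv (f := fun y => Real.log ((1 + y) / (1 - y)) / 2) d ?_
    have : 1 - y ^ 2 = (1 + y) * (1 - y) := by ring
    rw [this]
    simp only [id, Pi.div_apply]
    field_simp
    ring
  have I3 : ∫ y in a..b, (1 - y ^ 2) * (k y) ^ 2 ≤ ∫ y in Ioo (-1:ℝ) 1, (1 - y ^ 2) * (k y) ^ 2 := by
    rw [intervalIntegral.integral_of_le hab]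
    refine setIntegral_mono_set ?_ ?_ ?_
    · have : ContinuousOn (fun y : ℝ => (1 - y ^ 2) * (k y) ^ 2) (Icc (-1) 1) :=
        ContinuousOn.mul (by fun_prop) (hk.pow 2)
      exact this.integrableOn_Icc.mono_set Ioo_subset_Icc_self
    · refine (ae_restrict_iff' measurableSet_Ioo).2 (Filter.Eventually.of_forall fun y hy => ?_)
      have : 0 ≤ 1 - y ^ 2 := by nlinarith [hy.1, hy.2]
      simp only [Pi.zero_apply]
      positivity
    · exact (Ioc_subset_Icc_self.trans hsub).eventuallyLE
  rw [← I2]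
  have hL : 0 ≤ ∫ y in a..b, 1 / (1 - y ^ 2) :=
    intervalIntegral.integral_nonneg hab (fun y hy => (one_div_pos.2 (hpos y hy)).le)
  refine le_trans ?_ (mul_le_mul_of_nonneg_right I3 hL)
  rw [← I1]
  have key : ∀ s : ℝ, 0 ≤ (∫ y in a..b, 1 / (1 - y ^ 2)) * (s * s) +
      (-2 * ∫ y in a..b, k y) * s + ∫ y in a..b, (1 - y ^ 2) * (k y) ^ 2 := by
    intro s
    have e : (∫ y in a..b, 1 / (1 - y ^ 2)) * (s * s) +
      (-2 * ∫ y in a..b, k y) * s + ∫ y in a..b, (1 - y ^ 2) * (k y) ^ 2 =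
      ∫ y in a..b, ((s * s) * (1 / (1 - y ^ 2)) + (-2 * s) * k y + (1 - y ^ 2) * (k y) ^ 2) := by
      rw [intervalIntegral.integral_add, intervalIntegral.integral_add,
        intervalIntegral.integral_const_mul, intervalIntegral.integral_const_mul]
      · ring
      · exact hic.intervalIntegrable.const_mul _
      · exact hkc.intervalIntegrable.const_mul _
      · exact (hic.intervalIntegrable.const_mul _).add (hkc.intervalIntegrable.const_mul _)
      · exact hqc.intervalIntegrable
    rw [e]
    refine intervalIntegral.integral_nonneg hab (fun y hy => ?_)
    have hp := hpos y hy
    have : (s * s) * (1 / (1 - y ^ 2)) + (-2 * s) * k y + (1 - y ^ 2) * (k y) ^ 2 =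
      (1 - y ^ 2) * (k y - s / (1 - y ^ 2)) ^ 2 := by
      field_simp
      ring
    rw [this]
    positivity
  have := discrim_le_zero key
  unfold discrim at this
  nlinarith

theorem aux_pt (h : ℝ → ℝ) (hc : ContinuousOn h (Icc (-1) 1)) :
    ∃ a ∈ Icc (-(1/2):ℝ) (1/2), h a ^ 2 ≤ ∫ y in Ioo (-1:ℝ) 1, h y ^ 2 := by
  have hs : Icc (-(1/2):ℝ) (1/2) ⊆ Ioo (-1) 1 :=
    fun y hy => ⟨by linarith [hy.1], by linarith [hy.2]⟩
  have h2 : ContinuousOn (fun y => h y ^ 2) (Icc (-1) 1) := hc.pow 2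
  obtain ⟨a, ha, hm⟩ := isCompact_Icc.exists_isMinOn (s := Icc (-(1/2):ℝ) (1/2))
    ⟨0, by norm_num, by norm_num⟩ (h2.mono (hs.trans Ioo_subset_Icc_self))
  refine ⟨a, ha, ?_⟩
  have hi : IntegrableOn (fun y => h y ^ 2) (Ioo (-1:ℝ) 1) :=
    h2.integrableOn_Icc.mono_set Ioo_subset_Icc_self
  calc h a ^ 2 = ∫ y in Icc (-(1/2):ℝ) (1/2), h a ^ 2 := by
        simp; norm_num
    _ ≤ ∫ y in Icc (-(1/2):ℝ) (1/2), h y ^ 2 :=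
        setIntegral_mono_on (by simp) (hi.mono_set hs) measurableSet_Icc
          (fun y hy => hm hy)
    _ ≤ _ := setIntegral_mono_set hi (Filter.Eventually.of_forall fun y => sq_nonneg (h y))
        hs.eventuallyLE

theorem aux_log_s13 (a : ℝ) (ha : a ∈ Icc (-(1/2):ℝ) (1/2)) :
    |Real.log ((1 + a) / (1 - a))| ≤ 2 := by
  have h1 : 0 < 1 + a := by linarith [ha.1]
  have h2 : 0 < 1 - a := by linarith [ha.2]
  rw [abs_le]
  constructor
  · have := Real.one_sub_inv_le_log_of_pos (div_pos h1 h2)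
    have e : ((1 + a) / (1 - a))⁻¹ ≤ 3 := by
      rw [inv_div, div_le_iff₀ h1]; linarith [ha.1]
    linarith
  · have := Real.log_le_sub_one_of_pos (div_pos h1 h2)
    have e : ((1 + a) / (1 - a)) ≤ 3 := by
      rw [div_le_iff₀ h2]; linarith [ha.2]
    linarith

/-- **Inequality (3.22)**: pointwise logarithmic bound on the second derivative,
`|g''(y)| ≲ D(g)^{1/2} (1 + |log((1+y)/(1-y))|^{1/2})` for `y ∈ (-1, 1)`. -/
theorem second_deriv_pointwise_log_bound :
    ∃ C > (0:ℝ), ∀ g : ℝ → ℝ, ContDiffOn ℝ 3 g (Icc (-1) 1) →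
      g (-1) = 0 → g 1 = 0 →
      ∀ y ∈ Ioo (-1:ℝ) 1, |dI (dI g) y| ≤
        C * dissipation g ^ ((1:ℝ)/2) *
          (1 + |Real.log ((1 + y) / (1 - y))| ^ ((1:ℝ)/2)) := by
  refine ⟨3, by norm_num, fun g hg _ _ y hy => ?_⟩
  have hU : UniqueDiffOn ℝ (Icc (-1:ℝ) 1) := uniqueDiffOn_Icc (by norm_num)
  have g1 : ContDiffOn ℝ 2 (dI g) (Icc (-1) 1) := hg.derivWithin hU (by norm_num)
  have g2 : ContDiffOn ℝ 1 (dI (dI g)) (Icc (-1) 1) := g1.derivWithin hU (by norm_num)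
  have g3 : ContDiffOn ℝ 0 (dI (dI (dI g))) (Icc (-1) 1) := g2.derivWithin hU (by norm_num)
  have hD : ∀ y ∈ Ioo (-1:ℝ) 1, HasDerivAt (dI (dI g)) (dI (dI (dI g)) y) y := fun y hy =>
    ((g2.differentiableOn (by norm_num) y (Ioo_subset_Icc_self hy)).hasDerivWithinAt).hasDerivAt
      (Icc_mem_nhds hy.1 hy.2)
  obtain ⟨a, ha, hA⟩ := aux_pt _ g2.continuousOn
  have hl := aux_log_s13 a ha
  have CS := aux_CS _ _ hD g3.continuousOn
  rw [← Real.sqrt_eq_rpow, ← Real.sqrt_eq_rpow]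
  unfold dissipation
  set P := ∫ y in Ioo (-1:ℝ) 1, (dI (dI g) y) ^ 2
  set Q := ∫ y in Ioo (-1:ℝ) 1, (1 - y ^ 2) * (dI (dI (dI g)) y) ^ 2 with hQ
  have hP0 : 0 ≤ P := (sq_nonneg _).trans hA
  have hQ0 : 0 ≤ Q := by
    refine setIntegral_nonneg measurableSet_Ioo fun y hy => ?_
    have : 0 ≤ 1 - y ^ 2 := by nlinarith [hy.1, hy.2]
    positivity
  set h := dI (dI g)
  set l := Real.log ((1 + y) / (1 - y))
  set la := Real.log ((1 + a) / (1 - a))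
  have hm : (h y - h a) ^ 2 ≤ Q * (|l - la| / 2) := by
    rcases le_total a y with hay | hay
    · refine (CS a y (by linarith [ha.1]) hay hy.2).trans ?_
      gcongr
      exact le_abs_self _
    · have := CS y a hy.1 hay (by linarith [ha.2])
      rw [abs_sub_comm, ← neg_sub (h a), neg_sq]
      refine this.trans ?_
      gcongr
      exact le_abs_self _
  have hm2 : (h y - h a) ^ 2 ≤ (8 * P + 1/2 * Q) * (|l| + 2) := by
    have : |l - la| ≤ |l| + 2 := (abs_sub _ _).trans (by linarith)
    have : Q * (|l - la| / 2) ≤ Q * ((|l| + 2) / 2) := by gcongr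
    nlinarith [mul_nonneg hP0 (abs_nonneg l)]
  have hA2 : h a ^ 2 ≤ (8 * P + 1/2 * Q) := by linarith
  set D := 8 * P + 1/2 * Q
  have b1 := Real.abs_le_sqrt hm2
  have b2 := Real.abs_le_sqrt hA2
  have hD0 : 0 ≤ D := (sq_nonneg _).trans hA2
  rw [Real.sqrt_mul hD0] at b1
  have b3 : √(|l| + 2) ≤ √|l| + 2 := by
    rw [Real.sqrt_le_left (by positivity)]
    nlinarith [Real.sq_sqrt (abs_nonneg l), Real.sqrt_nonneg |l|]
  have b4 : |h y| ≤ |h y - h a| + |h a| := by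
    simpa using abs_add_le (h y - h a) (h a)
  have b5 := mul_le_mul_of_nonneg_left b3 (Real.sqrt_nonneg D)
  nlinarith [mul_nonneg (Real.sqrt_nonneg D) (Real.sqrt_nonneg |l|)]
end

section
/- For every integer $m \ge 1$ there exists a constant $C = C(m) > 0$ such that for every function $g$ three times continuously differentiable on $[-1,1]$ with $g(-1)=g(1)=0$, one has $\sup_{y \in (-1,1)} \frac{|g(y)|^m}{1-y^2} \le C\, E(g)^{\frac{m}{2}-\frac{1}{4}}\, D(g)^{1/4}$. -/
open MeasureTheory Set
open scoped ENNReal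

lemma aux_ii {f : ℝ → ℝ} (hf : ContinuousOn f (Icc (-1) 1)) :
    IntervalIntegrable f volume (-1) 1 :=
  ContinuousOn.intervalIntegrable (by rwa [uIcc_of_le (by norm_num)])

lemma aux_set (f : ℝ → ℝ) : ∫ y in Ioo (-1:ℝ) 1, f y = ∫ y in (-1:ℝ)..1, f y := by
  rw [intervalIntegral.integral_of_le (by norm_num), integral_Ioc_eq_integral_Ioo]

lemma aux_cs {f g : ℝ → ℝ} (hf : ContinuousOn f (Icc (-1) 1)) (hg : ContinuousOn g (Icc (-1) 1)) :
    (∫ y in (-1:ℝ)..1, f y * g y) ^ 2 ≤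
      (∫ y in (-1:ℝ)..1, f y ^ 2) * (∫ y in (-1:ℝ)..1, g y ^ 2) := by
  have h : ∀ t : ℝ, 0 ≤ (∫ y in (-1:ℝ)..1, f y ^ 2) * (t * t) +
      (2 * ∫ y in (-1:ℝ)..1, f y * g y) * t + (∫ y in (-1:ℝ)..1, g y ^ 2) := by
    intro t
    have h0 : 0 ≤ ∫ y in (-1:ℝ)..1, (t * f y + g y) ^ 2 :=
      intervalIntegral.integral_nonneg (by norm_num) (fun _ _ => sq_nonneg _)
    have h1 : ∫ y in (-1:ℝ)..1, (t * f y + g y) ^ 2 =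
        ∫ y in (-1:ℝ)..1, ((t * t) * (f y ^ 2) + (2 * t) * (f y * g y) + g y ^ 2) := by
      congr 1; ext y; ring
    rw [h1, intervalIntegral.integral_add, intervalIntegral.integral_add,
      intervalIntegral.integral_const_mul, intervalIntegral.integral_const_mul] at h0
    · linarith
    · exact aux_ii (by fun_prop)
    · exact aux_ii (by fun_prop)
    · exact aux_ii (by fun_prop)
    · exact aux_ii (by fun_prop)
  have := discrim_le_zero h
  unfold discrim at this
  nlinarith

lemma aux_v {F f : ℝ → ℝ} (hF : ContinuousOn F (Icc (-1) 1)) (hf : ContinuousOn f (Icc (-1) 1))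
    (hd : ∀ x ∈ Ioo (-1:ℝ) 1, HasDerivAt F (f x) x) (x y : ℝ) (hx : x ∈ Icc (-1:ℝ) 1)
    (hy : y ∈ Icc (-1:ℝ) 1) : |F y - F x| ≤ ∫ t in (-1:ℝ)..1, |f t| := by
  wlog h : x ≤ y generalizing x y
  · rw [abs_sub_comm]; exact this y x hy hx (le_of_not_ge h)
  have hs : Icc x y ⊆ Icc (-1) 1 := Icc_subset_Icc hx.1 hy.2
  have h1 : ∫ t in x..y, f t = F y - F x :=
    intervalIntegral.integral_eq_sub_of_hasDerivAt_of_le h (hF.mono hs)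
      (fun t ht => hd t ⟨hx.1.trans_lt ht.1, ht.2.trans_le hy.2⟩)
      (ContinuousOn.intervalIntegrable (by rw [uIcc_of_le h]; exact hf.mono hs))
  rw [← h1]
  refine (intervalIntegral.abs_integral_le_integral_abs h).trans ?_
  exact intervalIntegral.integral_mono_interval hx.1 h hy.2
    (Filter.Eventually.of_forall fun t => abs_nonneg _) (aux_ii hf.abs)

lemma aux_main (g : ℝ → ℝ) (hg : ContDiffOn ℝ 3 g (Icc (-1) 1)) (h1 : g (-1) = 0) (h2 : g 1 = 0) :
    0 ≤ energy g ∧ 0 ≤ dissipation g ∧ ∀ y ∈ Ioo (-1:ℝ) 1, |g y| ^ 2 ≤ 4 * energy g ∧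
      |g y| / (1 - y ^ 2) ≤ (energy g * dissipation g) ^ ((1:ℝ)/4) := by
  have hu : UniqueDiffOn ℝ (Icc (-1:ℝ) 1) := uniqueDiffOn_Icc (by norm_num)
  have hh : ContDiffOn ℝ 2 (dI g) (Icc (-1) 1) := hg.derivWithin hu (by norm_num)
  have hk : ContDiffOn ℝ 1 (dI (dI g)) (Icc (-1) 1) := hh.derivWithin hu (by norm_num)
  have hgc := hg.continuousOn
  have hhc := hh.continuousOn
  have hkc := hk.continuousOn
  have hgd : DifferentiableOn ℝ g (Icc (-1) 1) := hg.differentiableOn (by norm_num)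
  have hhd : DifferentiableOn ℝ (dI g) (Icc (-1) 1) := hh.differentiableOn (by norm_num)
  have dg : ∀ x ∈ Ioo (-1:ℝ) 1, HasDerivAt g (dI g x) x := fun x hx =>
    (hgd x (Ioo_subset_Icc_self hx)).hasDerivWithinAt.hasDerivAt (Icc_mem_nhds hx.1 hx.2)
  have dh : ∀ x ∈ Ioo (-1:ℝ) 1, HasDerivAt (dI g) (dI (dI g) x) x := fun x hx =>
    (hhd x (Ioo_subset_Icc_self hx)).hasDerivWithinAt.hasDerivAt (Icc_mem_nhds hx.1 hx.2)
  have eE : ∫ y in (-1:ℝ)..1, (dI g y) ^ 2 = 2 * energy g := by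
    unfold energy; rw [aux_set]; ring
  have hE : 0 ≤ ∫ y in (-1:ℝ)..1, (dI g y) ^ 2 :=
    intervalIntegral.integral_nonneg (by norm_num) (fun _ _ => sq_nonneg _)
  have hK : 0 ≤ ∫ y in (-1:ℝ)..1, (dI (dI g) y) ^ 2 :=
    intervalIntegral.integral_nonneg (by norm_num) (fun _ _ => sq_nonneg _)
  have hT : 0 ≤ ∫ y in (-1:ℝ)..1, (1 - y ^ 2) * (dI (dI (dI g)) y) ^ 2 :=
    intervalIntegral.integral_nonneg (by norm_num)
      (fun y hy => mul_nonneg (by nlinarith [hy.1, hy.2]) (sq_nonneg _))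
  have eD : 8 * (∫ y in (-1:ℝ)..1, (dI (dI g) y) ^ 2) ≤ dissipation g := by
    unfold dissipation; rw [aux_set, aux_set]; linarith
  have E0 : 0 ≤ energy g := by linarith
  have D0 : 0 ≤ dissipation g := by linarith
  refine ⟨E0, D0, ?_⟩
  -- sup bound of the derivative
  obtain ⟨c, hc, hc0⟩ := exists_hasDerivAt_eq_zero (by norm_num : (-1:ℝ) < 1) hgc
    (by rw [h1, h2]) dg
  set M := (energy g * dissipation g) ^ ((1:ℝ)/4) with hM
  have M0 : 0 ≤ M := by positivity
  have M4 : M ^ 4 = energy g * dissipation g := by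
    rw [hM, ← Real.rpow_natCast, ← Real.rpow_mul (by positivity)]; norm_num
  have hb : ∀ x ∈ Icc (-1:ℝ) 1, ‖derivWithin g (Icc (-1) 1) x‖ ≤ M := by
    intro x hx
    change |dI g x| ≤ M
    have hv := aux_v (F := fun x => (dI g x) ^ 2) (f := fun x => 2 * (dI g x * dI (dI g) x))
      (by fun_prop) (by fun_prop)
      (fun x hx => by
        have := (dh x hx).pow 2
        refine this.congr_deriv ?_
        simp only [Nat.cast_ofNat, Nat.add_one_sub_one, pow_one]; ring) c x (Ioo_subset_Icc_self hc) hx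
    simp only [hc0, abs_mul] at hv
    rw [intervalIntegral.integral_const_mul] at hv
    have hcs := aux_cs hhc.abs hkc.abs
    simp only [sq_abs] at hcs
    rw [eE] at hcs
    set I := ∫ t in (-1:ℝ)..1, |dI g t| * |dI (dI g) t| with hI
    have I0 : 0 ≤ I := intervalIntegral.integral_nonneg (by norm_num) (fun _ _ => by positivity)
    norm_num at hv
    have e1 : I ^ 2 ≤ (M ^ 2 / 2) ^ 2 := by
      have : (M ^ 2 / 2) ^ 2 = energy g * dissipation g / 4 := by rw [← M4]; ring
      rw [this]
      nlinarith [mul_le_mul_of_nonneg_left eD E0]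
    have e2 := abs_le_of_sq_le_sq' e1 (by positivity)
    exact abs_le_of_sq_le_sq (by nlinarith [e2.2]) M0
  intro y hy
  have hyc := Ioo_subset_Icc_self hy
  constructor
  · have hv := aux_v hgc hhc dg (-1) y (by norm_num) hyc
    rw [h1, sub_zero] at hv
    have hcs := aux_cs (f := fun _ => (1:ℝ)) continuousOn_const hhc.abs
    simp only [sq_abs, one_mul] at hcs
    rw [eE] at hcs
    norm_num at hcs
    have := pow_le_pow_left₀ (abs_nonneg _) hv 2
    nlinarith
  · have p : 0 < 1 - y ^ 2 := by nlinarith [hy.1, hy.2]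
    rw [div_le_iff₀ p]
    have a1 := (convex_Icc (-1:ℝ) 1).norm_image_sub_le_of_norm_derivWithin_le hgd hb
      (by norm_num : (-1:ℝ) ∈ Icc (-1:ℝ) 1) hyc
    have a2 := (convex_Icc (-1:ℝ) 1).norm_image_sub_le_of_norm_derivWithin_le hgd hb
      (by norm_num : (1:ℝ) ∈ Icc (-1:ℝ) 1) hyc
    rw [h1, sub_zero, Real.norm_eq_abs, Real.norm_eq_abs, abs_of_pos (by linarith [hy.1] : 0 < y - -1)] at a1
    rw [h2, sub_zero, Real.norm_eq_abs, Real.norm_eq_abs, abs_of_neg (by linarith [hy.2] : y - 1 < 0)] at a2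
    rcases le_total 0 y with h | h
    · refine a2.trans (mul_le_mul_of_nonneg_left ?_ M0)
      nlinarith [hy.2]
    · refine a1.trans (mul_le_mul_of_nonneg_left ?_ M0)
      nlinarith [hy.1]

/-- **Lemma 3.11**: for every integer `m ≥ 1`,
`‖g^m / (1-y²)‖_{L^∞(-1,1)} ≲ E(g)^{m/2 - 1/4} D(g)^{1/4}`. -/
theorem power_over_weight_sup (m : ℕ) (hm : 1 ≤ m) :
    ∃ C > (0:ℝ), ∀ g : ℝ → ℝ, ContDiffOn ℝ 3 g (Icc (-1) 1) →
      g (-1) = 0 → g 1 = 0 →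
      ∀ y ∈ Ioo (-1:ℝ) 1, |g y| ^ m / (1 - y ^ 2) ≤
        C * energy g ^ ((m:ℝ)/2 - 1/4) * dissipation g ^ ((1:ℝ)/4) := by
  obtain ⟨n, rfl⟩ : ∃ n, m = n + 1 := ⟨m - 1, by omega⟩
  refine ⟨2 ^ n, by positivity, ?_⟩
  intro g hg h1 h2 y hy
  obtain ⟨E0, D0, h⟩ := aux_main g hg h1 h2
  obtain ⟨ha, hb⟩ := h y hy
  have hs : |g y| ≤ 2 * energy g ^ ((1:ℝ)/2) := by
    rw [← Real.sqrt_eq_rpow]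
    refine abs_le_of_sq_le_sq ?_ (by positivity)
    rw [mul_pow, Real.sq_sqrt E0, ← sq_abs]; linarith
  have e : energy g ^ (((n + 1 : ℕ):ℝ)/2 - 1/4) =
      (energy g ^ ((1:ℝ)/2)) ^ n * energy g ^ ((1:ℝ)/4) := by
    rw [← Real.rpow_natCast, ← Real.rpow_mul E0, ← Real.rpow_add_of_nonneg E0 (by positivity)
      (by positivity)]
    congr 1; push_cast; ring
  rw [Real.mul_rpow E0 D0] at hb
  have p : 0 < 1 - y ^ 2 := by nlinarith [hy.1, hy.2]
  calc |g y| ^ (n+1) / (1 - y ^ 2) = |g y| ^ n * (|g y| / (1 - y ^ 2)) := by ring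
    _ ≤ (2 * energy g ^ ((1:ℝ)/2)) ^ n *
        (energy g ^ ((1:ℝ)/4) * dissipation g ^ ((1:ℝ)/4)) := by
      gcongr
    _ = _ := by rw [e]; ring
end

section
/- For every function $g$ three times continuously differentiable on $[-1,1]$ with $g(-1)=g(1)=0$, one has the identity $\mathbf{I}_4 = -\frac{120}{11}\,\mathbf{I}_7 - \frac{15}{2}\,\mathbf{I}_8 - \frac{60}{7}\,\mathbf{I}_9$, where $\mathbf{I}_4 = 30\int_{-1}^{1} y\,(1+g)^4\, g'\, (g'')^2\, dy$, $\mathbf{I}_7 = -\frac{11}{2}\int_{-1}^{1} (1-y^2)(1+g)^3 (g')^2 (g'')^2\, dy$, $\mathbf{I}_8 = -2\int_{-1}^{1} (1-y^2)(1+g)^4 (g'')^3\, dy$, and $\mathbf{I}_9 = -\frac{7}{2}\int_{-1}^{1} (1-y^2)(1+g)^4\, g'\, g'''\, g''\, dy$. -/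
open MeasureTheory Set

/-- `I₄ = 30 ∫ y (1+g)⁴ g' (g'')² dy`. -/
noncomputable def I4 (g : ℝ → ℝ) : ℝ :=
  30 * ∫ y in Ioo (-1:ℝ) 1, y * (1 + g y) ^ 4 * dI g y * (dI (dI g) y) ^ 2

/-- `I₇ = -(11/2) ∫ (1-y²) (1+g)³ (g')² (g'')² dy`. -/
noncomputable def I7 (g : ℝ → ℝ) : ℝ :=
  -(11/2) * ∫ y in Ioo (-1:ℝ) 1, (1 - y ^ 2) * (1 + g y) ^ 3 * (dI g y) ^ 2 * (dI (dI g) y) ^ 2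

/-- `I₈ = -2 ∫ (1-y²) (1+g)⁴ (g'')³ dy`. -/
noncomputable def I8 (g : ℝ → ℝ) : ℝ :=
  -2 * ∫ y in Ioo (-1:ℝ) 1, (1 - y ^ 2) * (1 + g y) ^ 4 * (dI (dI g) y) ^ 3

/-- `I₉ = -(7/2) ∫ (1-y²) (1+g)⁴ g' g''' g'' dy`. -/
noncomputable def I9 (g : ℝ → ℝ) : ℝ :=
  -(7/2) * ∫ y in Ioo (-1:ℝ) 1,
    (1 - y ^ 2) * (1 + g y) ^ 4 * dI g y * dI (dI (dI g)) y * dI (dI g) y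

/-- **Identity (4.10)**: `I₄ = -(120/11) I₇ - (15/2) I₈ - (60/7) I₉`. -/
theorem I4_identity (g : ℝ → ℝ) (hg : ContDiffOn ℝ 3 g (Icc (-1) 1))
    (hg1 : g (-1) = 0) (hg2 : g 1 = 0) :
    I4 g = -(120/11) * I7 g - (15/2) * I8 g - (60/7) * I9 g := by
  have hU : UniqueDiffOn ℝ (Icc (-1:ℝ) 1) := uniqueDiffOn_Icc (by norm_num)
  have h1 : ContDiffOn ℝ 2 (dI g) (Icc (-1) 1) := hg.derivWithin hU (by norm_num)
  have h2 : ContDiffOn ℝ 1 (dI (dI g)) (Icc (-1) 1) := h1.derivWithin hU (by norm_num)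
  have h3 : ContDiffOn ℝ 0 (dI (dI (dI g))) (Icc (-1) 1) := h2.derivWithin hU (by norm_num)
  have c0 := hg.continuousOn
  have c1 := h1.continuousOn
  have c2 := h2.continuousOn
  have c3 := h3.continuousOn
  have key : ∀ f : ℝ → ℝ, ∀ n : WithTop ℕ∞, n ≠ 0 → ContDiffOn ℝ n f (Icc (-1) 1) →
      ∀ y ∈ Ioo (-1:ℝ) 1, HasDerivAt f (dI f y) y := by
    intro f n hn hf y hy
    exact ((hf.differentiableOn hn) y (Ioo_subset_Icc_self hy)).hasDerivWithinAt.hasDerivAt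
      (Icc_mem_nhds hy.1 hy.2)
  have toI : ∀ f : ℝ → ℝ, ∫ y in Ioo (-1:ℝ) 1, f y = ∫ y in (-1:ℝ)..1, f y := by
    intro f
    rw [intervalIntegral.integral_of_le (by norm_num), integral_Ioc_eq_integral_Ioo]
  have ii : ∀ f : ℝ → ℝ, ContinuousOn f (Icc (-1) 1) →
      IntervalIntegrable f volume (-1) 1 := fun f hf =>
    hf.intervalIntegrable_of_Icc (by norm_num)
  have iA := ii (fun y => y * (1 + g y) ^ 4 * dI g y * (dI (dI g) y) ^ 2) (by fun_prop)
  have iB := ii (fun y => (1 - y ^ 2) * (1 + g y) ^ 3 * (dI g y) ^ 2 * (dI (dI g) y) ^ 2)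
    (by fun_prop)
  have iC := ii (fun y => (1 - y ^ 2) * (1 + g y) ^ 4 * (dI (dI g) y) ^ 3) (by fun_prop)
  have iD := ii (fun y => (1 - y ^ 2) * (1 + g y) ^ 4 * dI g y * dI (dI (dI g)) y * dI (dI g) y)
    (by fun_prop)
  have i1 := (iA.const_mul (-2)).add (iB.const_mul 4)
  have i2 := i1.add iC
  have i3 := i2.add (iD.const_mul 2)
  have ftc := intervalIntegral.integral_eq_sub_of_hasDerivAt_of_le
    (f := fun y => (1 - y ^ 2) * (1 + g y) ^ 4 * dI g y * (dI (dI g) y) ^ 2)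
    (a := (-1:ℝ)) (b := 1) (by norm_num) (by fun_prop) (fun y hy => by
      have d0 := key g 3 (by norm_num) hg y hy
      have d1 := key _ 2 (by norm_num) h1 y hy
      have d2 := key _ 1 (by norm_num) h2 y hy
      have := (((((hasDerivAt_id y).pow 2).const_sub 1).mul ((d0.const_add 1).pow 4)).mul
        d1).mul (d2.pow 2)
      refine HasDerivAt.congr_deriv (this.congr_of_eventuallyEq ?_) ?_
      · exact Filter.Eventually.of_forall fun z => by simp
      rotate_left
      · simp
        ring) i3
  rw [intervalIntegral.integral_add i2 (iD.const_mul 2), intervalIntegral.integral_add i1 iC,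
    intervalIntegral.integral_add (iA.const_mul (-2)) (iB.const_mul 4)] at ftc
  simp only [intervalIntegral.integral_const_mul] at ftc
  norm_num at ftc
  unfold I4 I7 I8 I9
  simp only [toI]
  linarith
end

section
/- Let $E, D : [0,\infty) \to [0,\infty)$ be differentiable functions and let $a, b > 0$, $\alpha > 1$, $\beta > 0$ be such that for all $t \ge 0$: $E'(t) + D(t) \le a\,(E(t)^{\alpha} + E(t)^{\beta} D(t))$ and $b\, E(t) \le D(t)$. Then there exist $\varepsilon > 0$ and $\nu > 0$ such that if $E(0) < \varepsilon$, then $E(t) \le E(0)\, e^{-\nu t}$ for all $t \ge 0$. -/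
open Set

/-- Uniform version: `ε` and `ν` depend only on `a, b, α, β`. -/
theorem decay_uniform (a b α β : ℝ) (ha : 0 < a) (hb : 0 < b) (hα : 1 < α) (hβ : 0 < β) :
    ∃ ε > (0:ℝ), ∃ ν > (0:ℝ), ∀ E D E' : ℝ → ℝ,
      (∀ t ≥ (0:ℝ), 0 ≤ E t) → (∀ t ≥ (0:ℝ), 0 ≤ D t) →
      (∀ t ≥ (0:ℝ), HasDerivWithinAt E (E' t) (Ici 0) t) →
      (∀ t ≥ (0:ℝ), E' t + D t ≤ a * (E t ^ α + E t ^ β * D t)) →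
      (∀ t ≥ (0:ℝ), b * E t ≤ D t) →
      E 0 < ε → ∀ t ≥ (0:ℝ), E t ≤ E 0 * Real.exp (-ν * t) := by
  have hα' : 0 < α - 1 := by linarith
  set δ := min ((1 / (4 * a)) ^ β⁻¹) ((b / (4 * a)) ^ (α - 1)⁻¹) with hδ
  have hδpos : 0 < δ := lt_min (by positivity) (by positivity)
  refine ⟨δ, hδpos, b / 2, by positivity, ?_⟩
  intro E D E' hEpos hDpos hE hineq hED h0
  have key : ∀ t ≥ (0:ℝ), E t ≤ δ → E' t ≤ -(b / 2) * E t := by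
    intro t ht h
    have e0 := hEpos t ht
    have h1 : a * E t ^ β ≤ 1 / 4 := by
      have : E t ^ β ≤ 1 / (4 * a) := by
        calc E t ^ β ≤ ((1 / (4 * a)) ^ β⁻¹) ^ β :=
              Real.rpow_le_rpow e0 (h.trans (min_le_left _ _)) hβ.le
          _ = _ := Real.rpow_inv_rpow (by positivity) hβ.ne'
      calc a * E t ^ β ≤ a * (1 / (4 * a)) := by gcongr
        _ = 1 / 4 := by field_simp
    have h2 : a * E t ^ (α - 1) ≤ b / 4 := by
      have : E t ^ (α - 1) ≤ b / (4 * a) := by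
        calc E t ^ (α - 1) ≤ ((b / (4 * a)) ^ (α - 1)⁻¹) ^ (α - 1) :=
              Real.rpow_le_rpow e0 (h.trans (min_le_right _ _)) hα'.le
          _ = _ := Real.rpow_inv_rpow (by positivity) hα'.ne'
      calc a * E t ^ (α - 1) ≤ a * (b / (4 * a)) := by gcongr
        _ = b / 4 := by field_simp
    have h3 : E t ^ α = E t ^ (α - 1) * E t := by
      have := Real.rpow_add_one' e0 (y := α - 1) (by linarith)
      rwa [sub_add_cancel] at this
    have h4 := hineq t ht
    rw [h3] at h4
    have h5 := mul_le_mul_of_nonneg_right h1 (hDpos t ht)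
    have h6 := mul_le_mul_of_nonneg_right h2 e0
    have h7 := hED t ht
    linarith
  have hcont : ContinuousOn E (Ici 0) := fun t ht => (hE t ht).continuousWithinAt
  have hbound : ∀ t ≥ (0:ℝ), E t ≤ δ := by
    intro T hT
    have e0 := hEpos 0 le_rfl
    have := image_le_of_deriv_right_lt_deriv_boundary' (f := E) (f' := E') (a := 0) (b := T)
      (B := fun _ => (E 0 + δ) / 2) (B' := fun _ => 0)
      (hcont.mono Icc_subset_Ici_self)
      (fun x hx => (hE x hx.1).mono (Ici_subset_Ici.2 hx.1)) (by linarith)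
      continuousOn_const (fun x _ => hasDerivWithinAt_const _ _ _)
      (by
        intro x hx hxe
        have := key x hx.1 (by linarith)
        have hp : 0 < E x := by linarith
        have : 0 < b / 2 * E x := by positivity
        linarith)
      (right_mem_Icc.2 hT)
    linarith
  have hexp : ∀ t : ℝ, HasDerivAt (fun t => Real.exp (b / 2 * t)) (Real.exp (b / 2 * t) * (b / 2)) t := by
    intro t
    simpa using ((hasDerivAt_id t).const_mul (b / 2)).exp
  have hanti : AntitoneOn (fun t => E t * Real.exp (b / 2 * t)) (Ici 0) := by
    apply antitoneOn_of_hasDerivWithinAt_nonpos (convex_Ici 0)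
      (f' := fun t => E' t * Real.exp (b / 2 * t) + E t * (Real.exp (b / 2 * t) * (b / 2)))
    · exact hcont.mul (by fun_prop)
    · intro t ht
      have ht' : t ∈ Ici (0:ℝ) := interior_subset ht
      exact ((hE t ht').mul (hexp t).hasDerivWithinAt).mono interior_subset
    · intro t ht
      have ht' : t ∈ Ici (0:ℝ) := interior_subset ht
      have := mul_le_mul_of_nonneg_right (key t ht' (hbound t ht')) (Real.exp_pos (b / 2 * t)).le
      linarith
  intro t ht
  have h := hanti (mem_Ici.2 le_rfl) (mem_Ici.2 ht) ht
  simp only [mul_zero, Real.exp_zero, mul_one] at h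
  rw [neg_mul, Real.exp_neg, ← div_eq_mul_inv, le_div_iff₀ (Real.exp_pos _)]
  exact h

/-- **Lemma 3.12**: if `E' + D ≤ a (E^α + E^β D)` and `b E ≤ D` on `[0, ∞)` with
`a, b > 0`, `α > 1`, `β > 0`, then there are `ε > 0` and `ν > 0` such that `E(0) < ε`
implies `E(t) ≤ E(0) e^{-ν t}` for all `t ≥ 0`. -/
theorem decay_of_energy_dissipation (E D E' : ℝ → ℝ)
    (hEpos : ∀ t ≥ (0:ℝ), 0 ≤ E t) (hDpos : ∀ t ≥ (0:ℝ), 0 ≤ D t)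
    (hE : ∀ t ≥ (0:ℝ), HasDerivWithinAt E (E' t) (Ici 0) t)
    (hD : DifferentiableOn ℝ D (Ici 0))
    (a b α β : ℝ) (ha : 0 < a) (hb : 0 < b) (hα : 1 < α) (hβ : 0 < β)
    (hineq : ∀ t ≥ (0:ℝ), E' t + D t ≤ a * (E t ^ α + E t ^ β * D t))
    (hED : ∀ t ≥ (0:ℝ), b * E t ≤ D t) :
    ∃ ε > (0:ℝ), ∃ ν > (0:ℝ), E 0 < ε →
      ∀ t ≥ (0:ℝ), E t ≤ E 0 * Real.exp (-ν * t) := by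
  obtain ⟨ε, hε, ν, hν, h⟩ := decay_uniform a b α β ha hb hα hβ
  exact ⟨ε, hε, ν, hν, h E D E' hEpos hDpos hE hineq hED⟩
end

section
/- Let $E, D : [0,\infty) \to [0,\infty)$ be differentiable functions and let $a, b > 0$, $\alpha_1, \alpha_2 > 1$, $\beta_1, \beta_2 > 0$ be such that for all $t \ge 0$: $E'(t) + D(t) \le a\,\left(E(t)^{\alpha_1} + E(t)^{\alpha_2} + \left(E(t)^{\beta_1} + E(t)^{\beta_2}\right) D(t)\right)$ and $b\, E(t) \le D(t)$. Then for every $c_0 > 0$ satisfying $1 - a(c_0^{\beta_1} + c_0^{\beta_2}) > 0$ and $\gamma := b\left(1 - a(c_0^{\beta_1} + c_0^{\beta_2})\right) - a(c_0^{\alpha_1 - 1} + c_0^{\alpha_2 - 1}) > 0$, one has: if $E(0) < c_0$, then $E(t) \le E(0)\, e^{-\gamma t}$ for all $t \ge 0$. -/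
open Set

/-- **Corollary 3.13**: if `E' + D ≤ a (E^{α₁} + E^{α₂} + (E^{β₁} + E^{β₂}) D)` and
`b E ≤ D` on `[0, ∞)`, then for every `c₀ > 0` with `1 - a (c₀^{β₁} + c₀^{β₂}) > 0` and
`γ := b (1 - a (c₀^{β₁} + c₀^{β₂})) - a (c₀^{α₁-1} + c₀^{α₂-1}) > 0`, one has:
`E(0) < c₀` implies `E(t) ≤ E(0) e^{-γ t}` for all `t ≥ 0`. -/
theorem decay_of_energy_dissipation_two_powers (E D E' : ℝ → ℝ)
    (hEpos : ∀ t ≥ (0:ℝ), 0 ≤ E t) (hDpos : ∀ t ≥ (0:ℝ), 0 ≤ D t)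
    (hE : ∀ t ≥ (0:ℝ), HasDerivWithinAt E (E' t) (Ici 0) t)
    (hD : DifferentiableOn ℝ D (Ici 0))
    (a b α₁ α₂ β₁ β₂ : ℝ) (ha : 0 < a) (hb : 0 < b)
    (hα₁ : 1 < α₁) (hα₂ : 1 < α₂) (hβ₁ : 0 < β₁) (hβ₂ : 0 < β₂)
    (hineq : ∀ t ≥ (0:ℝ), E' t + D t ≤
      a * (E t ^ α₁ + E t ^ α₂ + (E t ^ β₁ + E t ^ β₂) * D t))
    (hED : ∀ t ≥ (0:ℝ), b * E t ≤ D t)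
    (c₀ : ℝ) (hc₀ : 0 < c₀) (h1 : 0 < 1 - a * (c₀ ^ β₁ + c₀ ^ β₂))
    (hγ : 0 < b * (1 - a * (c₀ ^ β₁ + c₀ ^ β₂)) - a * (c₀ ^ (α₁ - 1) + c₀ ^ (α₂ - 1))) :
    E 0 < c₀ → ∀ t ≥ (0:ℝ), E t ≤ E 0 *
      Real.exp (-(b * (1 - a * (c₀ ^ β₁ + c₀ ^ β₂))
        - a * (c₀ ^ (α₁ - 1) + c₀ ^ (α₂ - 1))) * t) := by
  intro h0
  set γ := b * (1 - a * (c₀ ^ β₁ + c₀ ^ β₂)) - a * (c₀ ^ (α₁ - 1) + c₀ ^ (α₂ - 1)) with hγdef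
  have key : ∀ t ≥ (0:ℝ), E t ≤ c₀ → E' t ≤ -γ * E t := by
    intro t ht hc
    have hp := hEpos t ht
    have e : ∀ α : ℝ, 1 < α → E t ^ α ≤ c₀ ^ (α - 1) * E t := by
      intro α hα
      have h2 : E t ^ α = E t ^ (α - 1) * E t := by
        rw [← Real.rpow_add_one' hp (by linarith)]
        congr 1
        ring
      rw [h2]
      exact mul_le_mul_of_nonneg_right (Real.rpow_le_rpow hp hc (by linarith)) hp
    have f1 := Real.rpow_le_rpow hp hc hβ₁.le
    have f2 := Real.rpow_le_rpow hp hc hβ₂.le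
    have g := hineq t ht
    have g1 : (E t ^ β₁ + E t ^ β₂) * D t ≤ (c₀ ^ β₁ + c₀ ^ β₂) * D t :=
      mul_le_mul_of_nonneg_right (by linarith) (hDpos t ht)
    have g2 : a * (E t ^ α₁ + E t ^ α₂ + (E t ^ β₁ + E t ^ β₂) * D t) ≤
        a * (c₀ ^ (α₁ - 1) * E t + c₀ ^ (α₂ - 1) * E t + (c₀ ^ β₁ + c₀ ^ β₂) * D t) :=
      mul_le_mul_of_nonneg_left (by linarith [e α₁ hα₁, e α₂ hα₂]) ha.le
    have g3 := mul_le_mul_of_nonneg_left (hED t ht) h1.le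
    rw [hγdef]
    linarith
  intro T hT
  have hder : ∀ t ≥ (0:ℝ), HasDerivWithinAt E (E' t) (Ici t) t := fun t ht =>
    (hE t ht).mono (Ici_subset_Ici.2 ht)
  have hcont : ContinuousOn E (Icc 0 T) := fun t ht =>
    ((hE t ht.1).continuousWithinAt).mono Icc_subset_Ici_self
  have hle : ∀ t ∈ Icc 0 T, E t ≤ c₀ := by
    intro t ht
    refine image_le_of_deriv_right_lt_deriv_boundary' (B := fun _ => c₀) (B' := fun _ => 0)
      hcont (fun x hx => hder x hx.1) h0.le continuousOn_const
      (fun x hx => hasDerivWithinAt_const _ _ _) ?_ ht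
    intro x hx hxe
    have hxe' : E x = c₀ := hxe
    have := key x hx.1 hxe'.le
    rw [hxe'] at this
    nlinarith [mul_pos hγ hc₀]
  have hexp : ∀ t : ℝ, HasDerivAt (fun t => Real.exp (γ * t)) (Real.exp (γ * t) * γ) t := by
    intro t
    simpa using ((hasDerivAt_id t).const_mul γ).exp
  have hfin : E T * Real.exp (γ * T) ≤ E 0 := by
    refine image_le_of_deriv_right_le_deriv_boundary (f := fun t => E t * Real.exp (γ * t))
      (f' := fun t => E' t * Real.exp (γ * t) + E t * (Real.exp (γ * t) * γ))
      (B := fun _ => E 0) (B' := fun _ => 0)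
      (hcont.mul (by fun_prop)) (fun x hx => (hder x hx.1).mul (hexp x).hasDerivWithinAt)
      (by simp) continuousOn_const
      (fun x hx => hasDerivWithinAt_const _ _ _) ?_ (right_mem_Icc.2 hT)
    intro x hx
    have := key x hx.1 (hle x ⟨hx.1, hx.2.le⟩)
    nlinarith [mul_le_mul_of_nonneg_right this (Real.exp_pos (γ * x)).le]
  rw [neg_mul, Real.exp_neg, ← div_eq_mul_inv, le_div_iff₀ (Real.exp_pos _)]
  exact hfin
end
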